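/- arXiv:1204.2969 — 2 statements merged into one kernel-verified Lean document; each statement's English description precedes it below -/
import Mathlib

section
/- Let J be a totally disconnected, locally compact, Hausdorff topological group containing the Heisenberg group H(W) of a symplectic F-space W as a closed normal subgroup. For any two smooth oscillator representations ω and ω' of J (associated to the fixed character ψ), there exists a unique character χ of J which is trivial on H(W) such that ω' ≅ χ⊗ω. -/
/-!
Statement 2 (Lemma `uniqueo` of Sun–Zhu, "Conservation relations for local
theta correspondence").

`F` is a non-archimedean local field of characteristic zero (axiomatized as a
non-discrete, totally disconnected, locally compact Hausdorff topological field
of characteristic zero), with a fixed nontrivial unitary character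
`ψ : F → ℂˣ`.  `W` is a finite-dimensional symplectic `F`-space, and `H(W)` is
its Heisenberg group, realized concretely below as `Heisenberg B` for the
symplectic form `B`.  `J` is a totally disconnected, locally compact, Hausdorff
topological group containing `H(W)` as a closed normal subgroup (via the
injective continuous homomorphism `ι` with closed normal range).

Claim: for any two smooth oscillator representations `ω`, `ω'` of `J`
(associated to `ψ`), there exists a unique character `χ` of `J` which is
trivial on `H(W)` such that `ω' ≅ χ ⊗ ω`.
-/

section Heisenberg

variable {F : Type} [Field F] {Wsp : Type} [AddCommGroup Wsp] [Module F Wsp]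

/-- The Heisenberg group `H(W)` attached to a symplectic `F`-vector space `(Wsp, B)`:
as a set it is `Wsp × F`, with multiplication
`(w,t)(w',t') = (w + w', t + t' + B w w')`. -/
@[ext]
structure Heisenberg (B : Wsp →ₗ[F] Wsp →ₗ[F] F) : Type where
  w : Wsp
  t : F

namespace Heisenberg

variable {B : Wsp →ₗ[F] Wsp →ₗ[F] F}

instance : Group (Heisenberg B) where
  mul x y := ⟨x.w + y.w, x.t + y.t + B x.w y.w⟩
  one := ⟨0, 0⟩
  inv x := ⟨-x.w, -x.t + B x.w x.w⟩
  mul_assoc x y z := by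
    ext
    · exact add_assoc _ _ _
    · show x.t + y.t + B x.w y.w + z.t + B (x.w + y.w) z.w
        = x.t + (y.t + z.t + B y.w z.w) + B x.w (y.w + z.w)
      simp only [map_add, LinearMap.add_apply]
      ring
  one_mul x := by
    ext
    · exact zero_add _
    · show 0 + x.t + B 0 x.w = x.t
      simp
  mul_one x := by
    ext
    · exact add_zero _
    · show x.t + 0 + B x.w 0 = x.t
      simp
  inv_mul_cancel x := by
    ext
    · exact neg_add_cancel _
    · show -x.t + B x.w x.w + x.t + B (-x.w) x.w = 0
      simp only [map_neg, LinearMap.neg_apply]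
      ring

/-- The topology on the Heisenberg group, induced from `Wsp × F`. -/
instance [TopologicalSpace F] [TopologicalSpace Wsp] :
    TopologicalSpace (Heisenberg B) :=
  TopologicalSpace.induced (fun x => (x.w, x.t)) inferInstance

end Heisenberg

end Heisenberg

/-- A representation of a topological group is *smooth* if every vector has an
open stabilizer. -/
def IsSmoothRep {G : Type} [Group G] [TopologicalSpace G] {V : Type}
    [AddCommGroup V] [Module ℂ V] (ρ : Representation ℂ G V) : Prop :=
  ∀ v : V, IsOpen {g : G | ρ g v = v}

/-- A *smooth oscillator representation* (associated to the additive character `ψ`)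
of a topological group `J` containing the Heisenberg group `H(W)` (embedded via
`ι`): a smooth representation of `J` whose restriction to `H(W)` is irreducible
with central character `ψ` (the center of `H(W)` being `{(0, z) : z ∈ F}`). -/
def IsSmoothOscillatorRep {F : Type} [Field F] {Wsp : Type} [AddCommGroup Wsp]
    [Module F Wsp] {B : Wsp →ₗ[F] Wsp →ₗ[F] F}
    {J : Type} [Group J] [TopologicalSpace J]
    {V : Type} [AddCommGroup V] [Module ℂ V]
    (ι : Heisenberg B →* J) (ψ : AddChar F ℂ) (ρ : Representation ℂ J V) : Prop :=
  IsSmoothRep ρ ∧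
  (∃ v : V, v ≠ 0) ∧
  (∀ p : Submodule ℂ V,
      (∀ (h : Heisenberg B) (v : V), v ∈ p → ρ (ι h) v ∈ p) → p = ⊥ ∨ p = ⊤) ∧
  (∀ (z : F) (v : V), ρ (ι ⟨0, z⟩) v = ψ z • v)


open Topology Filter

theorem osc_tube {X Y Z : Type*} [TopologicalSpace X] [TopologicalSpace Y] [TopologicalSpace Z]
    {f : X × Y → Z} (hf : Continuous f) {C : Set X} (hC : IsCompact C) {D : Set Z} (hD : IsOpen D)
    (y : Y) (h : ∀ c ∈ C, f (c, y) ∈ D) : {x | ∀ c ∈ C, f (c, x) ∈ D} ∈ 𝓝 y := by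
  have := hC.eventually_forall_of_forall_eventually (x₀ := y) (P := fun x c => f (c, x) ∈ D) ?_
  · exact this
  · intro c hc
    have h1 : Continuous (fun z : Y × X => f (z.2, z.1)) := by fun_prop
    exact h1.continuousAt.preimage_mem_nhds (hD.mem_nhds (h c hc))

theorem osc_compact_open_addSubgroup (F : Type*) [AddCommGroup F] [TopologicalSpace F]
    [IsTopologicalAddGroup F]
    [LocallyCompactSpace F] [TotallyDisconnectedSpace F] [T2Space F] :
    ∃ O : AddSubgroup F, IsOpen (O : Set F) ∧ IsCompact (O : Set F) := by
  obtain ⟨K, hK, hK0⟩ := exists_compact_mem_nhds (0 : F)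
  obtain ⟨C, hC, h0C, hCK⟩ := (loc_compact_Haus_tot_disc_of_zero_dim (H := F)).mem_nhds_iff.1 hK0
  have hC : IsClopen C := hC
  have hCc : IsCompact C := hK.of_isClosed_subset hC.1 hCK
  let O : AddSubgroup F :=
    { carrier := {x | (∀ c ∈ C, c + x ∈ C) ∧ ∀ c ∈ C, c - x ∈ C}
      zero_mem' := by simp
      add_mem' := by
        rintro x y ⟨h1, h2⟩ ⟨h3, h4⟩
        refine ⟨fun c hc => ?_, fun c hc => ?_⟩
        · rw [← add_assoc]; exact h3 _ (h1 _ hc)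
        · rw [← sub_sub]; exact h4 _ (h2 _ hc)
      neg_mem' := by
        rintro x ⟨h1, h2⟩
        refine ⟨fun c hc => ?_, fun c hc => ?_⟩
        · rw [← sub_eq_add_neg]; exact h2 _ hc
        · rw [sub_neg_eq_add]; exact h1 _ hc }
  have hO : IsOpen (O : Set F) := by
    apply AddSubgroup.isOpen_of_mem_nhds (g := 0)
    have h1 := osc_tube (f := fun p : F × F => p.1 + p.2) (by fun_prop) hCc hC.2 0 (by simp)
    have h2 := osc_tube (f := fun p : F × F => p.1 - p.2) (by fun_prop) hCc hC.2 0 (by simp)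
    exact inter_mem h1 h2
  refine ⟨O, hO, hCc.of_isClosed_subset (O.isClosed_of_isOpen hO) ?_⟩
  intro x hx
  simpa using hx.1 0 h0C

theorem osc_compact_open_subring (F : Type*) [Field F] [TopologicalSpace F] [IsTopologicalRing F]
    [LocallyCompactSpace F] [TotallyDisconnectedSpace F] [T2Space F]
    (hF : ¬ DiscreteTopology F) :
    ∃ R : Subring F, IsOpen (R : Set F) ∧ IsCompact (R : Set F) := by
  obtain ⟨O, hO, hOc⟩ := osc_compact_open_addSubgroup F
  let R : Subring F :=
    { carrier := {x | ∀ o ∈ O, o * x ∈ O}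
      zero_mem' := by simp
      one_mem' := by simp
      add_mem' := by
        intro x y hx hy o ho
        rw [mul_add]; exact O.add_mem (hx o ho) (hy o ho)
      neg_mem' := by
        intro x hx o ho
        rw [mul_neg]; exact O.neg_mem (hx o ho)
      mul_mem' := by
        intro x y hx hy o ho
        rw [← mul_assoc]; exact hy _ (hx o ho) }
  have hR : IsOpen (R : Set F) := by
    apply AddSubgroup.isOpen_of_mem_nhds R.toAddSubgroup (g := 0)
    exact osc_tube (f := fun p : F × F => p.1 * p.2) (by fun_prop) hOc hO 0 (by simp)
  have hRcl : IsClosed (R : Set F) := R.toAddSubgroup.isClosed_of_isOpen hR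
  obtain ⟨o, ho, ho0⟩ : ∃ o ∈ O, o ≠ 0 := by
    by_contra! h
    apply hF
    apply discreteTopology_of_isOpen_singleton_zero
    convert hO
    ext x
    constructor
    · rintro rfl; exact O.zero_mem
    · intro hx; exact h x hx
  refine ⟨R, hR, ?_⟩
  have : IsCompact ((fun x => o⁻¹ * x) '' (O : Set F)) := hOc.image (by fun_prop)
  refine this.of_isClosed_subset hRcl ?_
  intro x hx
  exact ⟨o * x, hx o ho, by field_simp⟩

theorem osc_isOpen_mul (F : Type*) [Field F] [TopologicalSpace F] [IsTopologicalRing F]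
    {S : Set F} (hS : IsOpen S) {x : F} (hx : x ≠ 0) : IsOpen {y | ∃ r ∈ S, y = x * r} := by
  have : {y | ∃ r ∈ S, y = x * r} = (fun y => x⁻¹ * y) ⁻¹' S := by
    ext y
    constructor
    · rintro ⟨r, hr, rfl⟩; simpa [hx] using hr
    · intro h; exact ⟨_, h, by field_simp⟩
  rw [this]
  exact hS.preimage (by fun_prop)

theorem osc_ring_data (F : Type*) [Field F] [TopologicalSpace F] [IsTopologicalRing F]
    [LocallyCompactSpace F] [TotallyDisconnectedSpace F] [T2Space F]
    (hF : ¬ DiscreteTopology F) :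
    ∃ (R : Subring F) (a : F), IsOpen (R : Set F) ∧ IsCompact (R : Set F) ∧ a ∈ R ∧ a ≠ 0 ∧
      (∀ U ∈ 𝓝 (0 : F), ∃ n : ℕ, ∀ r ∈ R, a ^ n * r ∈ U) := by
  obtain ⟨R, hR, hRc⟩ := osc_compact_open_subring F hF
  obtain ⟨a, haR, ha0, hainv⟩ : ∃ a ∈ R, a ≠ 0 ∧ a⁻¹ ∉ R := by
    by_contra! h
    apply hF
    apply discreteTopology_of_isOpen_singleton_zero
    have h1 := osc_tube (f := fun p : F × F => p.1 * p.2) (by fun_prop) hRc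
      (isOpen_compl_singleton (x := (1 : F))) 0 (by simp)
    have h2 : (R : Set F) ∈ 𝓝 0 := hR.mem_nhds R.zero_mem
    rw [isOpen_singleton_iff_nhds_eq_pure]
    refine le_antisymm ?_ (pure_le_nhds _)
    rw [le_pure_iff]
    filter_upwards [h1, h2] with x hx hxR
    by_contra hx0
    exact hx _ (h x hxR hx0) (inv_mul_cancel₀ hx0)
  have hpow : ∀ n, a ^ n ∈ R := fun n => R.pow_mem haR n
  have hinter : ∀ x : F, (∀ n : ℕ, ∃ r ∈ R, x = a ^ n * r) → x = 0 := by
    intro x hx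
    by_contra hx0
    have : CompactSpace R := isCompact_iff_compactSpace.mp hRc
    let I : AddSubgroup R :=
      { carrier := {y | ∃ r ∈ R, (y : F) = x * r}
        zero_mem' := ⟨0, R.zero_mem, by simp⟩
        add_mem' := by
          rintro y z ⟨r, hr, h⟩ ⟨s, hs, h'⟩
          exact ⟨r + s, R.add_mem hr hs, by push_cast; rw [h, h']; ring⟩
        neg_mem' := by
          rintro y ⟨r, hr, h⟩
          exact ⟨-r, R.neg_mem hr, by push_cast; rw [h]; ring⟩ }
    have hI : IsOpen (I : Set R) := (osc_isOpen_mul F hR hx0).preimage continuous_subtype_val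
    have hfin : Finite (R ⧸ I) := AddSubgroup.quotient_finite_of_isOpen I hI
    obtain ⟨n, m, hnm, hq⟩ := Finite.exists_ne_map_eq_of_infinite
      (fun n : ℕ => (QuotientAddGroup.mk (⟨a ^ n, hpow n⟩ : R) : R ⧸ I))
    wlog hlt : n < m generalizing n m
    · exact this m n hnm.symm hq.symm (lt_of_le_of_ne (not_lt.mp hlt) hnm.symm)
    rw [QuotientAddGroup.eq] at hq
    obtain ⟨r, hr, h⟩ := hq
    obtain ⟨s, hs, h'⟩ := hx m
    push_cast at h
    apply hainv
    obtain ⟨k, rfl⟩ := Nat.exists_eq_add_of_lt hlt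
    have h3 : a ^ n * 1 = a ^ n * (a * (a ^ k * (1 - s * r))) := by
      rw [h'] at h
      linear_combination -h
    have h4 := mul_left_cancel₀ (pow_ne_zero n ha0) h3
    rw [inv_eq_of_mul_eq_one_right h4.symm]
    exact R.mul_mem (hpow k) (R.sub_mem R.one_mem (R.mul_mem hs hr))
  refine ⟨R, a, hR, hRc, haR, ha0, ?_⟩
  intro U hU
  obtain ⟨D, hDU, hD, h0D⟩ := mem_nhds_iff.mp hU
  by_contra! hcon
  have hcl : ∀ n : ℕ, IsCompact ((fun r => a ^ n * r) '' (R : Set F)) := fun n =>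
    hRc.image (by fun_prop)
  have hne : (⋂ n : ℕ, ((fun r => a ^ n * r) '' (R : Set F)) \ D).Nonempty := by
    apply IsCompact.nonempty_iInter_of_sequence_nonempty_isCompact_isClosed
    · rintro n _ ⟨⟨r, hr, rfl⟩, h⟩
      exact ⟨⟨a * r, R.mul_mem haR hr, by simp only; ring⟩, h⟩
    · intro n
      obtain ⟨r, hr, h⟩ := hcon n
      exact ⟨_, ⟨r, hr, rfl⟩, fun h' => h (hDU h')⟩
    · exact (hcl 0).diff hD
    · intro n
      exact ((hcl n).diff hD).isClosed
  obtain ⟨x, hx⟩ := hne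
  rw [Set.mem_iInter] at hx
  have : x = 0 := hinter x fun n => by
    obtain ⟨r, hr, h⟩ := (hx n).1
    exact ⟨r, hr, h.symm⟩
  exact (hx 0).2 (this ▸ h0D)

/-- The orthogonal complement of a set with respect to a bi-character. -/
def oscPerp {F E : Type*} [Field F] [AddCommGroup E] [Module F E] (ψ : AddChar F ℂ)
    (β : E →ₗ[F] E →ₗ[F] F) (S : Set E) : AddSubgroup E where
  carrier := {w | ∀ l ∈ S, ψ (β l w) = 1}
  zero_mem' := by intro l _; simp
  add_mem' := by
    intro x y hx hy l hl
    rw [map_add, AddChar.map_add_eq_mul, hx l hl, hy l hl, one_mul]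
  neg_mem' := by
    intro x hx l hl
    rw [map_neg, AddChar.map_neg_eq_inv, hx l hl, inv_one]

theorem osc_lattice_coord (F : Type*) [Field F] [TopologicalSpace F] [IsTopologicalRing F]
    [LocallyCompactSpace F] [TotallyDisconnectedSpace F] [T2Space F]
    (hF : ¬ DiscreteTopology F) (ψ : AddChar F ℂ) (hψo : IsOpen {z | ψ z = 1})
    (hψ_ne : ∃ z : F, ψ z ≠ 1) (n : ℕ)
    (β : (Fin n → F) →ₗ[F] (Fin n → F) →ₗ[F] F) (halt : ∀ x y, β x y = - β y x)
    (hnd : ∀ x, (∀ y, β y x = 0) → x = 0) (U : Set (Fin n → F)) (hU : U ∈ 𝓝 0) :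
    ∃ L P : AddSubgroup (Fin n → F), P = oscPerp ψ β L ∧ L = oscPerp ψ β P ∧ (L : Set _) ⊆ U ∧
      L.relIndex P ≠ 0 := by
  obtain ⟨R, a, hR, hRc, haR, ha0, hsm⟩ := osc_ring_data F hF
  have hpow : ∀ n, a ^ n ∈ R := fun n => R.pow_mem haR n
  have hRcl : IsClosed (R : Set F) := hRc.isClosed
  have hβc : Continuous (fun p : (Fin n → F) × (Fin n → F) => β p.1 p.2) := by
    have : ∀ p : (Fin n → F) × (Fin n → F), β p.1 p.2 =
        ∑ i, p.1 i * β (fun j => if i = j then 1 else 0) p.2 := by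
      intro p
      rw [LinearMap.pi_apply_eq_sum_univ β p.1]
      simp [LinearMap.sum_apply]
    simp_rw [this]
    refine continuous_finsetSum _ fun i _ => ?_
    have h2 := LinearMap.continuous_on_pi (β (fun j => if i = j then 1 else 0))
    fun_prop
  have hψcl : IsClosed {z | ψ z = 1} := by
    let K : AddSubgroup F :=
      { carrier := {z | ψ z = 1}
        zero_mem' := by simp
        add_mem' := by
          intro x y hx hy
          have hx : ψ x = 1 := hx
          have hy : ψ y = 1 := hy
          simp [AddChar.map_add_eq_mul, hx, hy]
        neg_mem' := by
          intro x hx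
          have hx : ψ x = 1 := hx
          simp [AddChar.map_neg_eq_inv, hx] }
    exact K.isClosed_of_isOpen hψo
  have habs : ∀ x : F, ∃ m : ℕ, a ^ m * x ∈ R := by
    intro x
    have h1 : (fun y => y * x) ⁻¹' (R : Set F) ∈ 𝓝 0 := by
      apply (hR.preimage (by fun_prop)).mem_nhds
      simp
    obtain ⟨m, hm⟩ := hsm _ h1
    refine ⟨m, ?_⟩
    simpa using hm 1 R.one_mem
  have hmono : ∀ (x : F) (m k : ℕ), m ≤ k → a ^ m * x ∈ R → a ^ k * x ∈ R := by
    intro x m k hmk hx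
    obtain ⟨d, rfl⟩ := Nat.exists_eq_add_of_le hmk
    rw [pow_add, mul_comm (a ^ m), mul_assoc]
    exact R.mul_mem (hpow d) hx
  have habsE : ∀ x : Fin n → F, ∃ m : ℕ, ∀ i, a ^ m * x i ∈ R := by
    intro x
    choose m hm using fun i => habs (x i)
    exact ⟨Finset.univ.sup m, fun i => hmono _ _ _ (Finset.le_sup (Finset.mem_univ i)) (hm i)⟩
  have hsmE : ∀ V ∈ 𝓝 (0 : Fin n → F), ∃ m : ℕ, ∀ c : Fin n → F, (∀ i, c i ∈ R) →
      a ^ m • c ∈ V := by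
    intro V hV
    rw [nhds_pi, Filter.mem_pi] at hV
    obtain ⟨I, -, t, ht, hsub⟩ := hV
    choose m hm using fun i => hsm (t i) (ht i)
    refine ⟨Finset.univ.sup m, fun c hc => hsub fun i _ => ?_⟩
    obtain ⟨d, hd⟩ := Nat.exists_eq_add_of_le (Finset.le_sup (f := m) (Finset.mem_univ i))
    rw [hd]
    have := hm i (a ^ d * c i) (R.mul_mem (hpow d) (hc i))
    simpa [pow_add, mul_assoc] using this
  let Λ : Set (Fin n → F) := {c | ∀ i, c i ∈ R}
  have hΛs : ∀ r ∈ R, ∀ c ∈ Λ, r • c ∈ Λ := fun r hr c hc i => R.mul_mem hr (hc i)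
  -- a^{-k} Λ is compact
  have hcpt : ∀ k : ℕ, IsCompact {c : Fin n → F | a ^ k • c ∈ Λ} := by
    intro k
    have h1 : IsCompact (Set.pi Set.univ (fun _ : Fin n => (R : Set F))) :=
      isCompact_univ_pi fun _ => hRc
    have h2 := h1.image (f := fun c : Fin n → F => (a ^ k)⁻¹ • c) (by fun_prop)
    convert h2 using 1
    ext c
    constructor
    · intro hc
      refine ⟨a ^ k • c, fun i _ => hc i, ?_⟩
      simp only
      rw [smul_smul, inv_mul_cancel₀ (pow_ne_zero _ ha0), one_smul]
    · rintro ⟨d, hd, rfl⟩ 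
      show a ^ k • ((a ^ k)⁻¹ • d) ∈ Λ
      rw [smul_smul, mul_inv_cancel₀ (pow_ne_zero _ ha0), one_smul]
      exact fun i => hd i trivial
  have hΛo : IsOpen Λ := by
    have : Λ = Set.pi Set.univ (fun _ : Fin n => (R : Set F)) := by ext; simp [Λ]
    rw [this]
    exact isOpen_set_pi Set.finite_univ fun _ _ => hR
  have hPcl : ∀ S : Set (Fin n → F), IsClosed (oscPerp ψ β S : Set (Fin n → F)) := by
    intro S
    have : (oscPerp ψ β S : Set (Fin n → F)) = ⋂ l ∈ S, (fun w => β l w) ⁻¹' {z | ψ z = 1} := by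
      ext w; simp [oscPerp]
    rw [this]
    exact isClosed_biInter fun l _ => hψcl.preimage (LinearMap.continuous_on_pi (β l))
  have hPR : ∀ r ∈ R, ∀ x ∈ oscPerp ψ β Λ, r • x ∈ oscPerp ψ β Λ := by
    intro r hr x hx l hl
    have := hx (r • l) (hΛs r hr l hl)
    simpa using this
  have hbd : ∃ N : ℕ, ∀ x ∈ oscPerp ψ β Λ, a ^ N • x ∈ Λ := by
    by_contra! hcon
    have hne : (⋂ m : ℕ, {c : Fin n → F | a ^ 1 • c ∈ Λ ∧ c ∉ Λ ∧
        (a ^ m)⁻¹ • c ∈ oscPerp ψ β Λ}).Nonempty := by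
      have hcl : ∀ m : ℕ, IsCompact {c : Fin n → F | a ^ 1 • c ∈ Λ ∧ c ∉ Λ ∧
        (a ^ m)⁻¹ • c ∈ oscPerp ψ β Λ} := by
        intro m
        have h1 : IsClosed {c : Fin n → F | c ∉ Λ ∧ (a ^ m)⁻¹ • c ∈ oscPerp ψ β Λ} :=
          hΛo.isClosed_compl.inter ((hPcl Λ).preimage (by fun_prop))
        exact (hcpt 1).inter_right h1
      apply IsCompact.nonempty_iInter_of_sequence_nonempty_isCompact_isClosed
      · rintro m c ⟨h1, h2, h3⟩
        refine ⟨h1, h2, ?_⟩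
        have := hPR a haR _ h3
        rw [smul_smul] at this
        convert this using 2
        rw [pow_succ]
        field_simp
      · intro m
        obtain ⟨x, hx, hxm⟩ := hcon m
        have hex : ∃ j : ℕ, a ^ j • x ∈ Λ := habsE x
        classical
        have hj := Nat.find_spec hex
        set j := Nat.find hex with hjdef
        have hjm : m < j := by
          by_contra hle
          apply hxm
          intro i
          exact hmono _ _ _ (not_lt.mp hle) (hj i)
        obtain ⟨d, hd⟩ := Nat.exists_eq_add_of_lt hjm
        refine ⟨a ^ (m + d) • x, ?_, ?_, ?_⟩
        · rw [smul_smul, ← pow_add, show 1 + (m + d) = j by omega]; exact hj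
        · exact Nat.find_min hex (by omega)
        · rw [smul_smul, pow_add, inv_mul_cancel_left₀ (pow_ne_zero _ ha0)]
          exact hPR _ (hpow d) _ hx
      · exact hcl 0
      · exact fun m => (hcl m).isClosed
    obtain ⟨d, hd⟩ := hne
    rw [Set.mem_iInter] at hd
    have hline : ∀ t : F, t • d ∈ oscPerp ψ β Λ := by
      intro t
      obtain ⟨m, hm⟩ := habs t
      have := hPR _ hm _ (hd m).2.2
      rw [smul_smul] at this
      convert this using 2
      field_simp [pow_ne_zero m ha0]
    have hd0 : d = 0 := by
      apply hnd
      intro y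
      have hΛ0 : ∀ l ∈ Λ, β l d = 0 := by
        intro l hl
        by_contra h0
        obtain ⟨z, hz⟩ := hψ_ne
        apply hz
        have := hline (z / β l d) l hl
        simpa [h0] using this
      obtain ⟨m, hm⟩ := habsE y
      have := hΛ0 (a ^ m • y) hm
      simpa [ha0] using this
    exact (hd 0).2.1 (hd0 ▸ fun i => R.zero_mem)
  obtain ⟨N, hN⟩ := hbd
  obtain ⟨j₀, hj₀⟩ := hsmE U hU
  let M : Set (Fin n → F) := {c | a ^ (N + j₀) • c ∈ Λ}
  let L := oscPerp ψ β M
  have hsymm : ∀ x y, ψ (β x y) = 1 → ψ (β y x) = 1 := by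
    intro x y h
    rw [halt, AddChar.map_neg_eq_inv, h, inv_one]
  have hLn : (L : Set (Fin n → F)) ∈ 𝓝 0 :=
    osc_tube hβc (hcpt (N + j₀)) hψo 0 (by simp)
  obtain ⟨j, hj⟩ := hsmE _ hLn
  refine ⟨L, oscPerp ψ β L, rfl, ?_, ?_, ?_⟩
  · apply le_antisymm
    · intro x hx p hp
      exact hsymm _ _ (hp x hx)
    · intro x hx m hm
      exact hx m fun l hl => hsymm _ _ (hl m hm)
  · intro x hx
    have h1 : (a ^ (N + j₀))⁻¹ • x ∈ oscPerp ψ β Λ := by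
      intro l hl
      have := hx ((a ^ (N + j₀))⁻¹ • l) (by
        show a ^ (N + j₀) • _ ∈ Λ
        rwa [smul_smul, mul_inv_cancel₀ (pow_ne_zero _ ha0), one_smul])
      simpa using this
    have h2 := hj₀ _ (hN _ h1)
    rw [smul_smul, smul_smul, ← pow_add, add_comm j₀ N, mul_inv_cancel₀ (pow_ne_zero _ ha0),
      one_smul] at h2
    exact h2
  · have hPb : ∀ x ∈ oscPerp ψ β (L : Set (Fin n → F)), a ^ (N + j) • x ∈ Λ := by
      intro x hx
      rw [pow_add, ← smul_smul]
      apply hN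
      intro l hl
      have := hx _ (hj l hl)
      simpa using this
    have : CompactSpace R := isCompact_iff_compactSpace.mp hRc
    let θ : (Fin n → R) →+ (Fin n → F) :=
      { toFun := fun r i => (a ^ (N + j))⁻¹ * (r i : F)
        map_zero' := by ext; simp
        map_add' := by intro x y; ext i; simp [mul_add] }
    have hθ : Continuous θ := by
      show Continuous (fun (r : Fin n → R) i => (a ^ (N + j))⁻¹ * (r i : F))
      fun_prop
    have hop : IsOpen ((L.comap θ : AddSubgroup (Fin n → R)) : Set (Fin n → R)) := by
      apply AddSubgroup.isOpen_of_mem_nhds (g := 0)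
      have h0 : (L : Set (Fin n → F)) ∈ 𝓝 (θ 0) := by rwa [map_zero]
      exact hθ.continuousAt.preimage_mem_nhds h0
    have hfin : Finite ((Fin n → R) ⧸ L.comap θ) := AddSubgroup.quotient_finite_of_isOpen _ hop
    have hidx : (L.comap θ).index ≠ 0 := AddSubgroup.index_ne_zero_of_finite
    rw [AddSubgroup.index_comap] at hidx
    intro h0
    apply hidx
    apply AddSubgroup.relIndex_eq_zero_of_le_right _ h0
    intro x hx
    refine ⟨fun i => ⟨a ^ (N + j) * x i, hPb x hx i⟩, ?_⟩
    ext i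
    simp [θ, ha0]

theorem osc_lattice (F : Type*) [Field F] [CharZero F] [TopologicalSpace F] [IsTopologicalRing F]
    [LocallyCompactSpace F] [TotallyDisconnectedSpace F] [T2Space F]
    (hF : ¬ DiscreteTopology F) (ψ : AddChar F ℂ) (hψo : IsOpen {z | ψ z = 1})
    (hψ_ne : ∃ z : F, ψ z ≠ 1)
    (W : Type*) [AddCommGroup W] [Module F W] [FiniteDimensional F W]
    [TopologicalSpace W] [IsTopologicalAddGroup W] [ContinuousSMul F W]
    (B : W →ₗ[F] W →ₗ[F] F) (halt : ∀ w : W, B w w = 0)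
    (hnondeg : ∀ w : W, (∀ w' : W, B w w' = 0) → w = 0) (U : Set W) (hU : U ∈ 𝓝 0) :
    ∃ L P : AddSubgroup W, (∀ w, w ∈ P ↔ ∀ l ∈ L, ψ (2 * B l w) = 1) ∧
      (∀ w, w ∈ L ↔ ∀ p ∈ P, ψ (2 * B p w) = 1) ∧ (L : Set W) ⊆ U ∧ L.relIndex P ≠ 0 := by
  let b := Module.finBasis F W
  let φ := b.equivFun.symm
  have hφ : Continuous φ := LinearMap.continuous_on_pi φ.toLinearMap
  have hanti : ∀ x y, B x y = - B y x := by
    intro x y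
    have := halt (x + y)
    simp only [map_add, LinearMap.add_apply, halt] at this
    linear_combination this
  let β : (Fin (Module.finrank F W) → F) →ₗ[F] (Fin (Module.finrank F W) → F) →ₗ[F] F :=
    (2 : F) • B.compl₁₂ φ.toLinearMap φ.toLinearMap
  have hβ : ∀ x y, β x y = 2 * B (φ x) (φ y) := fun x y => by simp [β]
  obtain ⟨L, P, hP, hL, hLU, hidx⟩ := osc_lattice_coord F hF ψ hψo hψ_ne _ β
    (fun x y => by rw [hβ, hβ, hanti]; ring)
    (fun x hx => by
      have : φ x = 0 := by
        apply hnondeg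
        intro w
        have h := hx (φ.symm w)
        rw [hβ, φ.apply_symm_apply, hanti] at h
        simpa using h
      simpa using this)
    (φ ⁻¹' U) (hφ.continuousAt.preimage_mem_nhds (by simpa using hU))
  have hmem : ∀ (Q : AddSubgroup (Fin (Module.finrank F W) → F)) w,
      w ∈ Q.map φ.toLinearMap.toAddMonoidHom ↔ φ.symm w ∈ Q := by
    intro Q w
    constructor
    · rintro ⟨x, hx, rfl⟩
      simpa using hx
    · intro h
      exact ⟨_, h, by simp⟩
  have key : ∀ Q Q' : AddSubgroup (Fin (Module.finrank F W) → F), Q' = oscPerp ψ β Q →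
      ∀ w, w ∈ Q'.map φ.toLinearMap.toAddMonoidHom ↔
        ∀ l ∈ Q.map φ.toLinearMap.toAddMonoidHom, ψ (2 * B l w) = 1 := by
    rintro Q Q' rfl w
    rw [hmem]
    constructor
    · intro h l hl
      have := h _ ((hmem _ _).1 hl)
      simpa [hβ] using this
    · intro h l hl
      have := h (φ l) ((hmem _ _).2 (by simpa using hl))
      rw [hβ]
      simpa using this
  refine ⟨L.map φ.toLinearMap.toAddMonoidHom, P.map φ.toLinearMap.toAddMonoidHom,
    key _ _ hP, key _ _ hL, ?_, ?_⟩
  · intro w hw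
    have := hLU ((hmem _ _).1 hw)
    simpa using this
  · rwa [AddSubgroup.relIndex_map_map_of_injective]
    exact φ.injective

/-- Projective representations of `W` with the Heisenberg cocycle. -/
def OscWeyl {F W V : Type*} [Field F] [AddCommGroup W] [Module F W] [AddCommGroup V] [Module ℂ V]
    (ψ : AddChar F ℂ) (B : W →ₗ[F] W →ₗ[F] F) (ρ : W → V →ₗ[ℂ] V) : Prop :=
  (∀ v, ρ 0 v = v) ∧ ∀ w w' v, ρ w (ρ w' v) = ψ (B w w') • ρ (w + w') v

/-- Irreducibility of such a projective representation. -/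
def OscIrr {W V : Type*} [AddCommGroup V] [Module ℂ V] (ρ : W → V →ₗ[ℂ] V) : Prop :=
  ∀ p : Submodule ℂ V, (∀ w, ∀ v ∈ p, ρ w v ∈ p) → p = ⊥ ∨ p = ⊤

set_option linter.unusedSectionVars false

section OscAlg

variable {F W V V' : Type*} [Field F] [AddCommGroup W] [Module F W] [AddCommGroup V] [Module ℂ V]
  [AddCommGroup V'] [Module ℂ V'] {ψ : AddChar F ℂ} {B : W →ₗ[F] W →ₗ[F] F}
  {ρ : W → V →ₗ[ℂ] V} {ρ' : W → V' →ₗ[ℂ] V'}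

theorem OscWeyl.comm (hρ : OscWeyl ψ B ρ) (hanti : ∀ x y, B x y = - B y x) (l w : W) (v : V) :
    ρ l (ρ w v) = ψ (2 * B l w) • ρ w (ρ l v) := by
  rw [hρ.2, hρ.2, smul_smul, ← AddChar.map_add_eq_mul, hanti w l, add_comm w l]
  congr 2
  ring

theorem OscWeyl.add_eq (hρ : OscWeyl ψ B ρ) (w w' : W) (v : V) :
    ρ (w + w') v = ψ (- B w w') • ρ w (ρ w' v) := by
  rw [hρ.2, smul_smul, ← AddChar.map_add_eq_mul]
  simp

theorem osc_fixed_zero (L : Set W) (s : Finset W) : ∀ (x : V) (y : W → V) (c : W → W → ℂ),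
    (∀ l ∈ L, ρ l x = x) → (∀ i ∈ s, ∀ l ∈ L, ρ l (y i) = c i l • y i) →
    (∀ i ∈ s, ∃ l ∈ L, c i l ≠ 1) → x = ∑ i ∈ s, y i → x = 0 := by
  classical
  induction s using Finset.induction_on with
  | empty => intro x y c _ _ _ h; simpa using h
  | insert i s hi ih =>
    intro x y c hx hy hc hsum
    obtain ⟨l, hl, hl1⟩ := hc i (Finset.mem_insert_self _ _)
    have h1 : (1 - c i l) • x = ∑ j ∈ s, (c j l - c i l) • y j := by
      have h2 : (1 - c i l) • x = ρ l x - c i l • x := by rw [hx l hl, sub_smul, one_smul]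
      rw [h2, hsum, map_sum, Finset.sum_insert hi, Finset.sum_insert hi,
        hy i (Finset.mem_insert_self _ _) l hl, smul_add, add_sub_add_left_eq_sub, Finset.smul_sum,
        ← Finset.sum_sub_distrib]
      refine Finset.sum_congr rfl fun j hj => ?_
      rw [hy j (Finset.mem_insert_of_mem hj) l hl, sub_smul]
    have h3 := ih ((1 - c i l) • x) (fun j => (c j l - c i l) • y j) c
      (fun l' hl' => by rw [map_smul, hx l' hl'])
      (fun j hj l' hl' => by
        simp only [map_smul]
        rw [hy j (Finset.mem_insert_of_mem hj) l' hl', smul_comm])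
      (fun j hj => hc j (Finset.mem_insert_of_mem hj)) h1
    rcases smul_eq_zero.1 h3 with h | h
    · exact absurd (sub_eq_zero.1 h).symm hl1
    · exact h

theorem osc_extract (hρ : OscWeyl ψ B ρ) (hanti : ∀ x y, B x y = - B y x) {L P : AddSubgroup W}
    (hP : ∀ w, w ∈ P ↔ ∀ l ∈ L, ψ (2 * B l w) = 1) {m u : V} (hm : ∀ l ∈ L, ρ l m = m)
    (hu : u ∈ Submodule.span ℂ (Set.range fun w => ρ w m)) (huL : ∀ l ∈ L, ρ l u = u) :
    u ∈ Submodule.span ℂ ((fun w => ρ w m) '' (P : Set W)) := by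
  classical
  obtain ⟨c, hc⟩ := Finsupp.mem_span_range_iff_exists_finsupp.1 hu
  have heig : ∀ w, ∀ l ∈ L, ρ l (c w • ρ w m) = ψ (2 * B l w) • (c w • ρ w m) := by
    intro w l hl
    rw [map_smul, hρ.comm hanti, hm l hl, smul_comm]
  have hsplit : u = (∑ w ∈ c.support with w ∈ P, c w • ρ w m) +
      ∑ w ∈ c.support with w ∉ P, c w • ρ w m := by
    rw [Finset.sum_filter_add_sum_filter_not, ← hc, Finsupp.sum]
  have h0 : u - (∑ w ∈ c.support with w ∈ P, c w • ρ w m) = 0 := by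
    apply osc_fixed_zero (ρ := ρ) (L : Set W) {w ∈ c.support | w ∉ P} _ (fun w => c w • ρ w m)
      (fun w l => ψ (2 * B l w))
    · intro l hl
      rw [map_sub, huL l hl, map_sum]
      congr 1
      refine Finset.sum_congr rfl fun w hw => ?_
      rw [heig w l hl, (hP w).1 (Finset.mem_filter.1 hw).2 l hl, one_smul]
    · intro i _ l hl
      exact heig i l hl
    · intro i hi
      have := (Finset.mem_filter.1 hi).2
      rw [hP] at this
      push Not at this
      exact this
    · rw [sub_eq_iff_eq_add, add_comm]; exact hsplit
  rw [sub_eq_zero.1 h0]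
  refine Submodule.sum_mem _ fun w hw => Submodule.smul_mem _ _ (Submodule.subset_span ?_)
  exact ⟨w, (Finset.mem_filter.1 hw).2, rfl⟩

theorem osc_stable_span (hρ : OscWeyl ψ B ρ) (m : V) (w : W) (v : V)
    (hv : v ∈ Submodule.span ℂ (Set.range fun w => ρ w m)) :
    ρ w v ∈ Submodule.span ℂ (Set.range fun w => ρ w m) := by
  induction hv using Submodule.span_induction with
  | mem x hx =>
    obtain ⟨w', rfl⟩ := hx
    simp only
    rw [hρ.2]
    exact Submodule.smul_mem _ _ (Submodule.subset_span ⟨_, rfl⟩)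
  | zero => simp
  | add x y _ _ hx hy => rw [map_add]; exact Submodule.add_mem _ hx hy
  | smul c x _ hx => rw [map_smul]; exact Submodule.smul_mem _ _ hx

theorem osc_span_top (hρ : OscWeyl ψ B ρ) (hirr : OscIrr ρ) {m : V} (hm : m ≠ 0) :
    Submodule.span ℂ (Set.range fun w => ρ w m) = ⊤ := by
  refine (hirr _ fun w v hv => osc_stable_span hρ m w v hv).resolve_left fun h => hm ?_
  have : m ∈ Submodule.span ℂ (Set.range fun w => ρ w m) :=
    Submodule.subset_span ⟨0, hρ.1 m⟩
  rwa [h, Submodule.mem_bot] at this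

/-- The vectors fixed by `L`. -/
def oscFix (ρ : W → V →ₗ[ℂ] V) (L : AddSubgroup W) : Submodule ℂ V where
  carrier := {v | ∀ l ∈ L, ρ l v = v}
  zero_mem' := by intro l _; simp
  add_mem' := by intro x y hx hy l hl; rw [map_add, hx l hl, hy l hl]
  smul_mem' := by intro c x hx l hl; rw [map_smul, hx l hl]

theorem osc_fix_stable (hρ : OscWeyl ψ B ρ) (hanti : ∀ x y, B x y = - B y x) {L P : AddSubgroup W}
    (hP : ∀ w, w ∈ P ↔ ∀ l ∈ L, ψ (2 * B l w) = 1) {p : W} (hp : p ∈ P) {u : V}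
    (hu : u ∈ oscFix ρ L) : ρ p u ∈ oscFix ρ L := by
  intro l hl
  rw [hρ.comm hanti, (hP p).1 hp l hl, one_smul, hu l hl]

theorem osc_out_sub (L P : AddSubgroup W) (p : P) :
    (((QuotientAddGroup.mk p : P ⧸ L.addSubgroupOf P).out : P) : W) - p ∈ L := by
  have h := QuotientAddGroup.out_eq' (QuotientAddGroup.mk p : P ⧸ L.addSubgroupOf P)
  rw [eq_comm, QuotientAddGroup.eq] at h
  rw [AddSubgroup.mem_addSubgroupOf] at h
  push_cast at h
  rwa [neg_add_eq_sub] at h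

theorem osc_fix_finite (hρ : OscWeyl ψ B ρ) (hanti : ∀ x y, B x y = - B y x) (hirr : OscIrr ρ)
    {L P : AddSubgroup W}
    (hP : ∀ w, w ∈ P ↔ ∀ l ∈ L, ψ (2 * B l w) = 1) [Finite (P ⧸ L.addSubgroupOf P)]
    {m : V} (hm0 : m ≠ 0) (hm : m ∈ oscFix ρ L) : FiniteDimensional ℂ (oscFix ρ L) := by
  let S : Set V := Set.range fun q : P ⧸ L.addSubgroupOf P => ρ (q.out : P) m
  have hS : S.Finite := Set.finite_range _
  have hle : oscFix ρ L ≤ Submodule.span ℂ S := by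
    intro u hu
    have h1 := osc_extract hρ hanti hP hm (by rw [osc_span_top hρ hirr hm0]; trivial) hu
    refine (Submodule.span_le.2 ?_) h1
    rintro _ ⟨p, hp, rfl⟩
    simp only
    have h2 := osc_out_sub L P ⟨p, hp⟩
    have h4 : ρ ((QuotientAddGroup.mk (⟨p, hp⟩ : P) : P ⧸ L.addSubgroupOf P).out : P) m ∈
        Submodule.span ℂ S := Submodule.subset_span ⟨_, rfl⟩
    generalize (((QuotientAddGroup.mk (⟨p, hp⟩ : P) : P ⧸ L.addSubgroupOf P).out : P) : W) = o
      at h2 h4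
    have h3 : p = o + (-(o - p)) := by abel
    rw [h3, hρ.add_eq, hm _ (L.neg_mem h2)]
    exact Submodule.smul_mem _ _ h4
  have : FiniteDimensional ℂ (Submodule.span ℂ S) := FiniteDimensional.span_of_finite ℂ hS
  exact Submodule.finiteDimensional_of_le hle

theorem osc_schur (hρ : OscWeyl ψ B ρ) (hanti : ∀ x y, B x y = - B y x) (hirr : OscIrr ρ)
    {L P : AddSubgroup W}
    (hP : ∀ w, w ∈ P ↔ ∀ l ∈ L, ψ (2 * B l w) = 1) [Finite (P ⧸ L.addSubgroupOf P)]
    {m : V} (hm0 : m ≠ 0) (hm : m ∈ oscFix ρ L) (f : V →ₗ[ℂ] V)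
    (hf : ∀ w v, f (ρ w v) = ρ w (f v)) : ∃ c : ℂ, ∀ v, f v = c • v := by
  have := osc_fix_finite hρ hanti hirr hP hm0 hm
  have hmaps : ∀ u ∈ oscFix ρ L, f u ∈ oscFix ρ L := by
    intro u hu l hl
    rw [← hf, hu l hl]
  have : Nontrivial (oscFix ρ L) := ⟨⟨m, hm⟩, 0, fun h => hm0 (by simpa using congrArg Subtype.val h)⟩
  obtain ⟨c, hc⟩ := Module.End.exists_eigenvalue (f.restrict hmaps)
  obtain ⟨u, hu, hu0⟩ := hc.exists_hasEigenvector
  rw [Module.End.mem_eigenspace_iff] at hu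
  refine ⟨c, fun v => ?_⟩
  have htop : LinearMap.ker (f - c • LinearMap.id) = ⊤ := by
    refine (hirr _ ?_).resolve_left ?_
    · intro w v hv
      simp only [LinearMap.mem_ker, LinearMap.sub_apply, LinearMap.smul_apply,
        LinearMap.id_apply] at hv ⊢
      rw [hf, ← map_smul, ← map_sub, hv, map_zero]
    · intro h
      apply hu0
      have : (u : V) ∈ LinearMap.ker (f - c • LinearMap.id) := by
        have := congrArg Subtype.val hu
        simp only [LinearMap.mem_ker, LinearMap.sub_apply, LinearMap.smul_apply,
          LinearMap.id_apply]
        rw [sub_eq_zero]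
        exact this
      rw [h, Submodule.mem_bot] at this
      exact Subtype.ext this
  have : v ∈ LinearMap.ker (f - c • LinearMap.id) := by rw [htop]; trivial
  simpa [sub_eq_zero] using this

theorem osc_reindex {M : Type*} [AddCommMonoid M] (L P : AddSubgroup W)
    [Fintype (P ⧸ L.addSubgroupOf P)] (h : W → M) (hh : ∀ p ∈ P, ∀ l ∈ L, h (p + l) = h p)
    (y : W) (hy : y ∈ P) :
    ∑ x : P ⧸ L.addSubgroupOf P, h (x.out : P) = ∑ x : P ⧸ L.addSubgroupOf P, h ((x.out : P) + y) := by
  rw [← Equiv.sum_comp (Equiv.addRight (QuotientAddGroup.mk (⟨y, hy⟩ : P) : P ⧸ L.addSubgroupOf P))]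
  refine Finset.sum_congr rfl fun x _ => ?_
  simp only [Equiv.coe_addRight]
  have h1 : x + QuotientAddGroup.mk (⟨y, hy⟩ : P) =
      (QuotientAddGroup.mk (x.out + (⟨y, hy⟩ : P)) : P ⧸ L.addSubgroupOf P) := by
    rw [QuotientAddGroup.mk_add, QuotientAddGroup.out_eq']
  rw [h1]
  have h2 := osc_out_sub L P (x.out + (⟨y, hy⟩ : P))
  have h3 := hh _ (x.out + (⟨y, hy⟩ : P)).2 _ h2
  rw [add_sub_cancel] at h3
  exact h3

theorem osc_orth {L P : AddSubgroup W}
    [Fintype (P ⧸ L.addSubgroupOf P)]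
    (hP : ∀ w, w ∈ P ↔ ∀ l ∈ L, ψ (2 * B l w) = 1)
    (hL : ∀ w, w ∈ L ↔ ∀ p ∈ P, ψ (2 * B p w) = 1) (q : W) (hqP : q ∈ P) (hq : q ∉ L) :
    ∑ x : P ⧸ L.addSubgroupOf P, ψ (2 * B (x.out : P) q) = 0 := by
  rw [hL] at hq
  push Not at hq
  obtain ⟨y, hy, hy1⟩ := hq
  have h1 := osc_reindex L P (fun x => ψ (2 * B x q)) (fun p _ l hl => by
    simp only [map_add, LinearMap.add_apply, mul_add, AddChar.map_add_eq_mul]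
    rw [(hP q).1 hqP l hl, mul_one]) y hy
  simp only [map_add, LinearMap.add_apply, mul_add, AddChar.map_add_eq_mul] at h1
  rw [← Finset.sum_mul] at h1
  have h2 : (∑ x : P ⧸ L.addSubgroupOf P, ψ (2 * B (x.out : P) q)) * (1 - ψ (2 * B y q)) = 0 := by
    rw [mul_sub, mul_one, ← h1, sub_self]
  rcases mul_eq_zero.1 h2 with h | h
  · exact h
  · exact absurd (sub_eq_zero.1 h).symm hy1

theorem osc_local_map (hρ : OscWeyl ψ B ρ) (hρ' : OscWeyl ψ B ρ') (halt : ∀ x, B x x = 0)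
    (hanti : ∀ x y, B x y = - B y x) {L P : AddSubgroup W}
    (hP : ∀ w, w ∈ P ↔ ∀ l ∈ L, ψ (2 * B l w) = 1)
    (hL : ∀ w, w ∈ L ↔ ∀ p ∈ P, ψ (2 * B p w) = 1) [Finite (P ⧸ L.addSubgroupOf P)]
    {v : V} (hv0 : v ≠ 0) (hv : v ∈ oscFix ρ L) {v' : V'} (hv0' : v' ≠ 0) (hv' : v' ∈ oscFix ρ' L) :
    ∃ (Φ : V →ₗ[ℂ] V') (v₁ : V), v₁ ∈ oscFix ρ L ∧ Φ v₁ ≠ 0 ∧ Φ v₁ ∈ oscFix ρ' L ∧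
      ∀ y ∈ P, ∀ u ∈ oscFix ρ L, Φ (ρ y u) = ρ' y (Φ u) := by
  have := Fintype.ofFinite (P ⧸ L.addSubgroupOf P)
  obtain ⟨lam, hlam⟩ : ∃ lam : V →ₗ[ℂ] ℂ, lam v = 1 := by
    obtain ⟨f, hf⟩ := Module.Projective.exists_dual_ne_zero ℂ hv0
    exact ⟨(f v)⁻¹ • f, by simp [inv_mul_cancel₀ hf]⟩
  let h : W → V → W → V' := fun x u w => ψ (2 * B x w) • lam (ρ (-w) u) • ρ' w v'
  let T : W → V →ₗ[ℂ] V' := fun x => ∑ q : P ⧸ L.addSubgroupOf P,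
    ψ (2 * B x (q.out : P)) • ((lam ∘ₗ ρ (-((q.out : P) : W))).smulRight (ρ' (q.out : P) v'))
  have hT : ∀ x u, T x u = ∑ q : P ⧸ L.addSubgroupOf P, h x u (q.out : P) := by
    intro x u
    simp [T, h, LinearMap.sum_apply]
  have hsymm : ∀ x y, ψ (2 * B x y) = 1 → ψ (2 * B y x) = 1 := by
    intro x y h
    rw [hanti, mul_neg, AddChar.map_neg_eq_inv, h, inv_one]
  have hLP : L ≤ P := by
    intro w hw
    rw [hP]
    intro l hl
    have h1 := hρ.comm hanti l w v
    rw [hv w hw, hv l hl, hv w hw] at h1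
    have h2 : (1 - ψ (2 * B l w)) • v = 0 := by rw [sub_smul, one_smul, ← h1, sub_self]
    exact (sub_eq_zero.1 ((smul_eq_zero.1 h2).resolve_right hv0)).symm
  have hinv : ∀ x ∈ P, ∀ u ∈ oscFix ρ L, ∀ p ∈ P, ∀ l ∈ L, h x u (p + l) = h x u p := by
    intro x hx u hu p hp l hl
    have e1 : ρ (-(p + l)) u = ψ (- B p l) • ρ (-p) u := by
      rw [neg_add, hρ.add_eq, hu _ (L.neg_mem hl)]
      simp
    have e2 : ρ' (p + l) v' = ψ (- B p l) • ρ' p v' := by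
      rw [hρ'.add_eq, hv' _ hl]
    have e3 : ψ (2 * B x (p + l)) = ψ (2 * B x p) := by
      rw [map_add, mul_add, AddChar.map_add_eq_mul, hsymm _ _ ((hP x).1 hx l hl), mul_one]
    have e4 : ψ (- B p l) * ψ (- B p l) = 1 := by
      rw [← AddChar.map_add_eq_mul, ← (hP p).1 hp l hl, hanti p l]
      congr 1; ring
    simp only [h]
    rw [e1, e2, e3, map_smul, smul_smul (_ • _), smul_eq_mul, mul_right_comm, e4, one_mul]
  have hequiv : ∀ x ∈ P, ∀ y ∈ P, ∀ u ∈ oscFix ρ L,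
      T x (ρ y u) = ψ (2 * B x y) • ρ' y (T x u) := by
    intro x hx y hy u hu
    rw [hT, hT, osc_reindex L P _ (hinv x hx _ (osc_fix_stable hρ hanti hP hy hu)) y hy, map_sum,
      Finset.smul_sum]
    refine Finset.sum_congr rfl fun q _ => ?_
    generalize ((q.out : P) : W) = w
    simp only [h]
    have e1 : ρ (-(w + y)) (ρ y u) = ψ (- B w y) • ρ (-w) u := by
      rw [hρ.2]
      simp [halt]
    have e2 : ρ' (w + y) v' = ψ (B w y) • ρ' y (ρ' w v') := by
      rw [add_comm, hρ'.add_eq, hanti y w, neg_neg]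
    have e4 : ψ (- B w y) * ψ (B w y) = 1 := by
      rw [← AddChar.map_add_eq_mul]; simp
    rw [e1, e2, map_smul, map_smul, map_smul, smul_smul (_ • _), smul_eq_mul, mul_right_comm, e4,
      one_mul, map_add, mul_add, AddChar.map_add_eq_mul, mul_comm (ψ _), smul_smul, smul_smul,
      smul_smul, mul_assoc]
  have hsum : ∑ x : P ⧸ L.addSubgroupOf P, T (x.out : P) v =
      (Fintype.card (P ⧸ L.addSubgroupOf P) : ℂ) • v' := by
    simp_rw [hT]
    rw [Finset.sum_comm, Finset.sum_eq_single (0 : P ⧸ L.addSubgroupOf P)]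
    · have h0 := osc_out_sub L P 0
      rw [QuotientAddGroup.mk_zero] at h0
      simp only [ZeroMemClass.coe_zero, sub_zero] at h0
      generalize (((0 : P ⧸ L.addSubgroupOf P).out : P) : W) = w at h0
      have : ∀ x : P ⧸ L.addSubgroupOf P, h (x.out : P) v w = v' := by
        intro x
        simp only [h]
        rw [hv _ (L.neg_mem h0), hv' _ h0, hlam, (hL w).1 h0 _ x.out.2, one_smul, one_smul]
      simp [this, Nat.cast_smul_eq_nsmul]
    · intro q _ hq
      simp only [h]
      rw [← Finset.sum_smul, osc_orth hP hL _ q.out.2, zero_smul]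
      intro hmem
      apply hq
      rw [← QuotientAddGroup.out_eq' q, QuotientAddGroup.eq_zero_iff]
      exact hmem
    · intro hq; exact absurd (Finset.mem_univ _) hq
  obtain ⟨x, hx⟩ : ∃ x : P ⧸ L.addSubgroupOf P, T (x.out : P) v ≠ 0 := by
    by_contra! hcon
    rw [Finset.sum_eq_zero fun x _ => hcon x] at hsum
    rcases smul_eq_zero.1 hsum.symm with h | h
    · exact Fintype.card_ne_zero (Nat.cast_eq_zero.1 h)
    · exact hv0' h
  have hxP := x.out.2
  generalize ((x.out : P) : W) = x₀ at hx hxP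
  have hcancel : ρ (-x₀) (ρ x₀ v) = v := by
    rw [hρ.2]; simp [halt, hρ.1]
  have hΦ : (T x₀ ∘ₗ ρ (-x₀)) (ρ x₀ v) = T x₀ v := by
    rw [LinearMap.comp_apply, hcancel]
  refine ⟨T x₀ ∘ₗ ρ (-x₀), ρ x₀ v, osc_fix_stable hρ hanti hP hxP hv, ?_, ?_, ?_⟩
  · rw [hΦ]; exact hx
  · rw [hΦ, hT]
    refine Submodule.sum_mem _ fun q _ => ?_
    exact Submodule.smul_mem _ _ (Submodule.smul_mem _ _ (osc_fix_stable hρ' hanti hP q.out.2 hv'))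
  · intro y hy u hu
    simp only [LinearMap.comp_apply]
    rw [hρ.comm hanti, map_smul, hequiv x₀ hxP y hy _ (osc_fix_stable hρ hanti hP (P.neg_mem hxP) hu),
      smul_smul, ← AddChar.map_add_eq_mul]
    simp

theorem osc_iso (hρ : OscWeyl ψ B ρ) (hρ' : OscWeyl ψ B ρ') (hirr : OscIrr ρ) (hirr' : OscIrr ρ')
    (halt : ∀ x, B x x = 0)
    (hanti : ∀ x y, B x y = - B y x) {L P : AddSubgroup W}
    (hP : ∀ w, w ∈ P ↔ ∀ l ∈ L, ψ (2 * B l w) = 1)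
    (hL : ∀ w, w ∈ L ↔ ∀ p ∈ P, ψ (2 * B p w) = 1) [Finite (P ⧸ L.addSubgroupOf P)]
    {v : V} (hv0 : v ≠ 0) (hv : v ∈ oscFix ρ L) {v' : V'} (hv0' : v' ≠ 0) (hv' : v' ∈ oscFix ρ' L) :
    ∃ e : V ≃ₗ[ℂ] V', ∀ w u, e (ρ w u) = ρ' w (e u) := by
  obtain ⟨Φ, v₁, hv₁, hΦ0, hΦL, hΦ⟩ := osc_local_map hρ hρ' halt hanti hP hL hv0 hv hv0' hv'
  have hv₁0 : v₁ ≠ 0 := fun h => hΦ0 (by rw [h, map_zero])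
  let σ : W → V × V' →ₗ[ℂ] V × V' := fun w => (ρ w).prodMap (ρ' w)
  have hσ : OscWeyl ψ B σ := by
    refine ⟨fun x => ?_, fun w w' x => ?_⟩
    · simp [σ, hρ.1, hρ'.1]
    · simp [σ, hρ.2, hρ'.2]
  have hmfix : ∀ l ∈ L, σ l (v₁, Φ v₁) = (v₁, Φ v₁) := by
    intro l hl
    simp [σ, hv₁ l hl, hΦL l hl]
  let N : Submodule ℂ (V × V') := Submodule.span ℂ (Set.range fun w => σ w (v₁, Φ v₁))
  have hN : ∀ w, ∀ x ∈ N, σ w x ∈ N := fun w x hx => osc_stable_span hσ _ w x hx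
  have hmN : (v₁, Φ v₁) ∈ N := Submodule.subset_span ⟨0, hσ.1 _⟩
  have hgraph : ∀ x ∈ N, (∀ l ∈ L, σ l x = x) → x.2 = Φ x.1 := by
    intro x hx hxL
    have h1 := osc_extract hσ hanti hP hmfix hx hxL
    have h2 : Submodule.span ℂ ((fun w => σ w (v₁, Φ v₁)) '' (P : Set W)) ≤ Φ.graph := by
      rw [Submodule.span_le]
      rintro _ ⟨p, hp, rfl⟩
      simp [σ, hΦ p hp v₁ hv₁]
    exact (LinearMap.mem_graph_iff _ _).1 (h2 h1)
  have hker2 : ∀ b, ((0 : V), b) ∈ N → b = 0 := by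
    have h1 : N.comap (LinearMap.inr ℂ V V') = ⊥ := by
      refine (hirr' _ ?_).resolve_right ?_
      · intro w b hb
        have := hN w _ hb
        simpa [σ] using this
      · intro htop
        have h2 : Φ v₁ ∈ N.comap (LinearMap.inr ℂ V V') := by rw [htop]; trivial
        have h3 := hgraph _ h2 (fun l hl => by simp [σ, hΦL l hl])
        apply hΦ0
        simpa using h3
    intro b hb
    have : b ∈ N.comap (LinearMap.inr ℂ V V') := hb
    rwa [h1, Submodule.mem_bot] at this
  have hker1 : ∀ b, (b, (0 : V')) ∈ N → b = 0 := by
    have h1 : N.comap (LinearMap.inl ℂ V V') = ⊥ := by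
      refine (hirr _ ?_).resolve_right ?_
      · intro w b hb
        have := hN w _ hb
        simpa [σ] using this
      · intro htop
        have h2 : v₁ ∈ N.comap (LinearMap.inl ℂ V V') := by rw [htop]; trivial
        have h3 := hgraph _ h2 (fun l hl => by simp [σ, hv₁ l hl])
        apply hΦ0
        simpa using h3.symm
    intro b hb
    have : b ∈ N.comap (LinearMap.inl ℂ V V') := hb
    rwa [h1, Submodule.mem_bot] at this
  have hs1 : N.map (LinearMap.fst ℂ V V') = ⊤ := by
    refine (hirr _ ?_).resolve_left ?_
    · rintro w _ ⟨x, hx, rfl⟩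
      exact ⟨σ w x, hN w x hx, by simp [σ]⟩
    · intro h
      have : v₁ ∈ N.map (LinearMap.fst ℂ V V') := ⟨_, hmN, rfl⟩
      rw [h, Submodule.mem_bot] at this
      exact hv₁0 this
  have hs2 : N.map (LinearMap.snd ℂ V V') = ⊤ := by
    refine (hirr' _ ?_).resolve_left ?_
    · rintro w _ ⟨x, hx, rfl⟩
      exact ⟨σ w x, hN w x hx, by simp [σ]⟩
    · intro h
      have : Φ v₁ ∈ N.map (LinearMap.snd ℂ V V') := ⟨_, hmN, rfl⟩
      rw [h, Submodule.mem_bot] at this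
      exact hΦ0 this
  let f1 : N →ₗ[ℂ] V := LinearMap.fst ℂ V V' ∘ₗ N.subtype
  let f2 : N →ₗ[ℂ] V' := LinearMap.snd ℂ V V' ∘ₗ N.subtype
  have hb1 : Function.Bijective f1 := by
    constructor
    · rw [injective_iff_map_eq_zero]
      rintro ⟨⟨x, y⟩, hxy⟩ h
      have h : x = 0 := h
      subst h
      simpa using hker2 y hxy
    · intro x
      have : x ∈ N.map (LinearMap.fst ℂ V V') := by rw [hs1]; trivial
      obtain ⟨n, hn, rfl⟩ := this
      exact ⟨⟨n, hn⟩, rfl⟩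
  have hb2 : Function.Bijective f2 := by
    constructor
    · rw [injective_iff_map_eq_zero]
      rintro ⟨⟨x, y⟩, hxy⟩ h
      have h : y = 0 := h
      subst h
      simpa using hker1 x hxy
    · intro x
      have : x ∈ N.map (LinearMap.snd ℂ V V') := by rw [hs2]; trivial
      obtain ⟨n, hn, rfl⟩ := this
      exact ⟨⟨n, hn⟩, rfl⟩
  let e1 := LinearEquiv.ofBijective f1 hb1
  let e2 := LinearEquiv.ofBijective f2 hb2
  have he : ∀ n : N, (e1.symm.trans e2) (n : V × V').1 = (n : V × V').2 := by
    intro n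
    have : e1.symm (n : V × V').1 = n := by
      rw [LinearEquiv.symm_apply_eq]; rfl
    rw [LinearEquiv.trans_apply, this]; rfl
  refine ⟨e1.symm.trans e2, fun w u => ?_⟩
  obtain ⟨n, rfl⟩ := hb1.2 u
  have h1 := he ⟨σ w n, hN w n n.2⟩
  have h2 := he n
  have h3 : f1 n = (n : V × V').1 := rfl
  rw [h3, h2]
  exact h1

end OscAlg

section OscRep

variable {F : Type} [Field F] {Wsp : Type} [AddCommGroup Wsp] [Module F Wsp]
  {B : Wsp →ₗ[F] Wsp →ₗ[F] F} {J : Type} [Group J] {V : Type} [AddCommGroup V] [Module ℂ V]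

theorem osc_rep_apply (ι : Heisenberg B →* J) (ψ : AddChar F ℂ) (ω : Representation ℂ J V)
    (hcen : ∀ (z : F) (v : V), ω (ι ⟨0, z⟩) v = ψ z • v) (h : Heisenberg B) (v : V) :
    ω (ι h) v = ψ h.t • ω (ι ⟨h.w, 0⟩) v := by
  have h1 : h = ⟨0, h.t⟩ * ⟨h.w, 0⟩ := by
    ext
    · show h.w = 0 + h.w
      simp
    · show h.t = h.t + 0 + B 0 h.w
      simp
  conv_lhs => rw [h1, map_mul, map_mul, Module.End.mul_apply, hcen]

theorem osc_weyl_of_rep (ι : Heisenberg B →* J) (ψ : AddChar F ℂ) (ω : Representation ℂ J V)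
    (hcen : ∀ (z : F) (v : V), ω (ι ⟨0, z⟩) v = ψ z • v) :
    OscWeyl ψ B (fun w => ω (ι ⟨w, 0⟩)) := by
  refine ⟨fun v => ?_, fun w w' v => ?_⟩
  · simp only [hcen]
    simp
  · simp only
    rw [← Module.End.mul_apply, ← map_mul, ← map_mul, osc_rep_apply ι ψ ω hcen]
    have h1 : ((⟨w, 0⟩ : Heisenberg B) * ⟨w', 0⟩).w = w + w' := rfl
    have h2 : ((⟨w, 0⟩ : Heisenberg B) * ⟨w', 0⟩).t = 0 + 0 + B w w' := rfl
    rw [h1, h2]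
    simp

theorem osc_irr_of_rep (ι : Heisenberg B →* J) (ψ : AddChar F ℂ) (ω : Representation ℂ J V)
    (hirr : ∀ p : Submodule ℂ V,
      (∀ (h : Heisenberg B) (v : V), v ∈ p → ω (ι h) v ∈ p) → p = ⊥ ∨ p = ⊤)
    (hcen : ∀ (z : F) (v : V), ω (ι ⟨0, z⟩) v = ψ z • v) :
    OscIrr (fun w => ω (ι ⟨w, 0⟩)) := by
  intro p hp
  apply hirr
  intro h v hv
  rw [osc_rep_apply ι ψ ω hcen]
  exact p.smul_mem _ (hp _ _ hv)

end OscRep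

/-- **Smooth oscillator representations are unique up to twisting by characters.**
For any two smooth oscillator representations `ω` and `ω'` of `J` associated to
`ψ`, there exists a unique character `χ` of `J` which is trivial on `H(W)` such
that `ω' ≅ χ ⊗ ω`. -/
theorem oscillator_rep_unique_up_to_character_twist
    -- `F` : a non-archimedean local field of characteristic zero
    (F : Type) [Field F] [CharZero F] [TopologicalSpace F] [IsTopologicalRing F]
    [LocallyCompactSpace F] [TotallyDisconnectedSpace F] [T2Space F]
    (hF : ¬ DiscreteTopology F)
    -- a fixed nontrivial unitary character `ψ` of `F`
    (ψ : AddChar F ℂ) (hψ_unitary : ∀ z : F, ‖ψ z‖ = 1) (hψ_ne : ∃ z : F, ψ z ≠ 1)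
    -- `W` : a finite-dimensional symplectic `F`-space
    (Wsp : Type) [AddCommGroup Wsp] [Module F Wsp] [FiniteDimensional F Wsp]
    [TopologicalSpace Wsp] [IsTopologicalAddGroup Wsp] [ContinuousSMul F Wsp]
    (B : Wsp →ₗ[F] Wsp →ₗ[F] F)
    (halt : ∀ w : Wsp, B w w = 0)
    (hnondeg : ∀ w : Wsp, (∀ w' : Wsp, B w w' = 0) → w = 0)
    -- `J` : a totally disconnected, locally compact, Hausdorff topological group
    (J : Type) [Group J] [TopologicalSpace J] [IsTopologicalGroup J]
    [LocallyCompactSpace J] [TotallyDisconnectedSpace J] [T2Space J]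
    -- containing `H(W)` as a closed normal subgroup
    (ι : Heisenberg B →* J) (hι_inj : Function.Injective ι)
    (hι_cont : Continuous ι) (hι_closed : IsClosed (Set.range ι))
    (hι_normal : (ι.range).Normal)
    -- two smooth oscillator representations of `J` associated to `ψ`
    (V V' : Type) [AddCommGroup V] [Module ℂ V] [AddCommGroup V'] [Module ℂ V']
    (ω : Representation ℂ J V) (ω' : Representation ℂ J V')
    (hω : IsSmoothOscillatorRep ι ψ ω) (hω' : IsSmoothOscillatorRep ι ψ ω') :
    ∃! χ : J →* ℂˣ, Continuous χ ∧ (∀ h : Heisenberg B, χ (ι h) = 1) ∧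
      ∃ e : V ≃ₗ[ℂ] V', ∀ (g : J) (v : V), e ((χ g : ℂ) • ω g v) = ω' g (e v) := by
  obtain ⟨hsm, ⟨v, hv0⟩, hirr₀, hcen⟩ := hω
  obtain ⟨hsm', ⟨v', hv0'⟩, hirr₀', hcen'⟩ := hω'
  have hanti : ∀ x y, B x y = - B y x := by
    intro x y
    have := halt (x + y)
    simp only [map_add, LinearMap.add_apply, halt] at this
    linear_combination this
  have hWv := osc_weyl_of_rep ι ψ ω hcen
  have hWv' := osc_weyl_of_rep ι ψ ω' hcen'
  have hirr := osc_irr_of_rep ι ψ ω hirr₀ hcen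
  have hirr' := osc_irr_of_rep ι ψ ω' hirr₀' hcen'
  -- continuity of `ψ`
  have hψo : IsOpen {z | ψ z = 1} := by
    have hc : Continuous (fun z : F => ι ⟨0, z⟩) :=
      hι_cont.comp (continuous_induced_rng.2 (by
        show Continuous (fun z : F => ((0 : Wsp), z))
        fun_prop))
    have h1 := (hsm v).preimage hc
    convert h1 using 1
    ext z
    simp only [Set.mem_setOf_eq, Set.mem_preimage, hcen]
    constructor
    · intro h; rw [h, one_smul]
    · intro h
      have h2 : (ψ z - 1) • v = 0 := by rw [sub_smul, h, one_smul, sub_self]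
      exact sub_eq_zero.1 ((smul_eq_zero.1 h2).resolve_right hv0)
  have hcw : Continuous (fun w : Wsp => ι ⟨w, 0⟩) :=
    hι_cont.comp (continuous_induced_rng.2 (by
      show Continuous (fun w : Wsp => (w, (0 : F)))
      fun_prop))
  have hU : ({w : Wsp | ω (ι ⟨w, 0⟩) v = v} ∩ {w : Wsp | ω' (ι ⟨w, 0⟩) v' = v'}) ∈ 𝓝 (0 : Wsp) := by
    refine Filter.inter_mem (((hsm v).preimage hcw).mem_nhds ?_)
      (((hsm' v').preimage hcw).mem_nhds ?_)
    · exact hWv.1 v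
    · exact hWv'.1 v'
  obtain ⟨L, P, hP, hL, hLU, hidx⟩ := osc_lattice F hF ψ hψo hψ_ne Wsp B halt hnondeg _ hU
  have hfin : Finite (P ⧸ L.addSubgroupOf P) := AddSubgroup.index_ne_zero_iff_finite.1 hidx
  have hv : v ∈ oscFix (fun w => ω (ι ⟨w, 0⟩)) L := fun l hl => (hLU hl).1
  have hv' : v' ∈ oscFix (fun w => ω' (ι ⟨w, 0⟩)) L := fun l hl => (hLU hl).2
  obtain ⟨e, he₀⟩ := osc_iso hWv hWv' hirr hirr' halt hanti hP hL hv0 hv hv0' hv'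
  have he : ∀ h u, e (ω (ι h) u) = ω' (ι h) (e u) := by
    intro h u
    rw [osc_rep_apply ι ψ ω hcen, osc_rep_apply ι ψ ω' hcen', map_smul]
    congr 1
    exact he₀ h.w u
  have hschur : ∀ f : V →ₗ[ℂ] V', (∀ h u, f (ω (ι h) u) = ω' (ι h) (f u)) →
      ∃ c : ℂ, ∀ u, f u = c • e u := by
    intro f hf
    obtain ⟨c, hc⟩ := osc_schur hWv hanti hirr hP hv0 hv (e.symm.toLinearMap ∘ₗ f) (by
      intro w u
      simp only [LinearMap.comp_apply, LinearEquiv.coe_coe]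
      rw [LinearEquiv.symm_apply_eq, hf, he, LinearEquiv.apply_symm_apply])
    refine ⟨c, fun u => ?_⟩
    have := congrArg e (hc u)
    simpa using this
  have hinv : ∀ g u, ω g⁻¹ (ω g u) = u := fun g u => by simp
  have hinv' : ∀ g u, ω g (ω g⁻¹ u) = u := fun g u => by simp
  have hex : ∀ g : J, ∃ c : ℂ, ∀ u, ω' g (e u) = c • e (ω g u) := by
    intro g
    obtain ⟨c, hc⟩ := hschur (ω' g ∘ₗ e.toLinearMap ∘ₗ ω g⁻¹) (by
      intro h u
      obtain ⟨h', hh'⟩ := hι_normal.conj_mem (ι h) ⟨h, rfl⟩ g⁻¹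
      simp only [LinearMap.comp_apply, LinearEquiv.coe_coe]
      have h1 : ω g⁻¹ (ω (ι h) u) = ω (ι h') (ω g⁻¹ u) := by
        rw [hh', ← Module.End.mul_apply, ← Module.End.mul_apply, ← map_mul, ← map_mul]
        congr 2
        group
      have h2 : ∀ x, ω' g (ω' (ι h') x) = ω' (ι h) (ω' g x) := by
        intro x
        rw [hh', ← Module.End.mul_apply, ← Module.End.mul_apply, ← map_mul, ← map_mul]
        congr 2
        group
      rw [h1, he, h2])
    refine ⟨c, fun u => ?_⟩
    have := hc (ω g u)
    simpa only [LinearMap.comp_apply, LinearEquiv.coe_coe, hinv] using this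
  choose c hc using hex
  have hev : e v ≠ 0 := by simpa using hv0
  have hinj : ∀ a b : ℂ, ∀ x : V', x ≠ 0 → a • x = b • x → a = b := by
    intro a b x hx h
    exact smul_left_injective ℂ hx h
  have hne : ∀ g, e (ω g v) ≠ 0 := by
    intro g h
    apply hv0
    have h1 : ω g v = 0 := by simpa using h
    rw [← hinv g v, h1, map_zero]
  let χ₀ : J →* ℂ :=
    { toFun := c
      map_one' := by
        apply hinj _ _ _ hev
        have := hc 1 v
        simp only [map_one, Module.End.one_apply] at this
        rw [one_smul]; exact this.symm
      map_mul' := by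
        intro g g'
        apply hinj _ _ _ (hne (g * g'))
        rw [← hc, map_mul, Module.End.mul_apply, hc g', map_smul, hc g, map_mul,
          Module.End.mul_apply, smul_smul, mul_comm] }
  have hχ : ∀ g, ((χ₀.toHomUnits g : ℂˣ) : ℂ) = c g := fun g => rfl
  refine ⟨χ₀.toHomUnits, ⟨?_, ?_, e, ?_⟩, ?_⟩
  · apply continuous_of_continuousAt_one
    have h1 : {g : J | ω g v = v} ∩ {g : J | ω' g (e v) = e v} ∈ 𝓝 (1 : J) :=
      Filter.inter_mem ((hsm v).mem_nhds (by simp)) ((hsm' (e v)).mem_nhds (by simp))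
    have h2 : (fun _ : J => (1 : ℂˣ)) =ᶠ[𝓝 1] χ₀.toHomUnits := by
      filter_upwards [h1] with g hg
      obtain ⟨hg1, hg2⟩ := hg
      have hg1 : ω g v = v := hg1
      have hg2 : ω' g (e v) = e v := hg2
      ext
      rw [hχ, Units.val_one]
      apply hinj _ _ _ hev
      have := hc g v
      rw [hg1, hg2] at this
      rw [one_smul]; exact this
    exact continuousAt_const.congr h2
  · intro h
    ext
    rw [hχ, Units.val_one]
    apply hinj _ _ _ (hne (ι h))
    rw [← hc, one_smul, he]
  · intro g u
    rw [hχ, map_smul, hc]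
  · rintro χ₂ ⟨-, hχ₂, e₂, he₂⟩
    obtain ⟨d, hd⟩ := hschur e₂.toLinearMap (by
      intro h u
      have := he₂ (ι h) u
      rw [hχ₂, Units.val_one, one_smul] at this
      exact this)
    have hd : ∀ u, e₂ u = d • e u := hd
    have hd0 : d ≠ 0 := by
      rintro rfl
      have := hd v
      rw [zero_smul] at this
      exact hv0 (by simpa using this)
    ext g
    rw [hχ]
    apply hinj _ _ _ (hne g)
    have h1 := he₂ g v
    rw [hd, hd, map_smul, map_smul, hc, smul_comm] at h1
    exact smul_right_injective V' hd0 (by simpa only [smul_comm d] using h1)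
end

section
/- Let X be a Lagrangian subspace of a finite-dimensional symplectic space W over a non-archimedean local field F of characteristic zero, viewed as an abelian subgroup of the Heisenberg group H(W) via x ↦ (x,0). Let ω be an irreducible smooth representation of H(W) with central character ψ. Then there exists a nonzero linear functional on ω which is invariant under X, and such a linear functional is unique up to scalar multiples. -/
open Topology

set_option linter.unusedSectionVars false

namespace LagInv

lemma isOpen_forall {A K L : Type*} [TopologicalSpace A] [TopologicalSpace K] [TopologicalSpace L]
    (f : A → K → L) (hf : Continuous (fun p : A × K => f p.1 p.2)) {C : Set K} (hC : IsCompact C)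
    {U : Set L} (hU : IsOpen U) : IsOpen {a | ∀ k ∈ C, f a k ∈ U} := by
  rw [isOpen_iff_eventually]
  intro a ha
  apply hC.eventually_forall_of_forall_eventually
  intro k hk
  exact (hU.preimage hf).mem_nhds (ha k hk)

lemma exists_compact_open_addSubgroup (F : Type) [AddCommGroup F] [TopologicalSpace F]
    [IsTopologicalAddGroup F]
    [LocallyCompactSpace F] [TotallyDisconnectedSpace F] [T2Space F] :
    ∃ U : AddSubgroup F, IsOpen (U : Set F) ∧ IsCompact (U : Set F) := by
  obtain ⟨K, hK, hK0⟩ := exists_compact_mem_nhds (0 : F)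
  obtain ⟨C, hC, h0, hCK⟩ := (loc_compact_Haus_tot_disc_of_zero_dim (H := F)).mem_nhds_iff.1 hK0
  have hC' : IsClopen C := hC
  have hCc : IsCompact C := hK.of_isClosed_subset hC'.1 hCK
  let U : AddSubgroup F :=
    { carrier := {a | (∀ c ∈ C, a + c ∈ C) ∧ (∀ c ∈ C, -a + c ∈ C)}
      zero_mem' := by simp
      add_mem' := by
        rintro a b ⟨ha, ha'⟩ ⟨hb, hb'⟩
        refine ⟨fun c hc => ?_, fun c hc => ?_⟩
        · rw [add_assoc]; exact ha _ (hb _ hc)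
        · rw [neg_add, add_assoc]; exact ha' _ (hb' _ hc)
      neg_mem' := by
        rintro a ⟨ha, ha'⟩
        exact ⟨ha', by simpa using ha⟩ }
  have hUo : IsOpen (U : Set F) :=
    (isOpen_forall (fun a c : F => a + c) (by fun_prop) hCc hC'.2).inter
      (isOpen_forall (fun a c : F => -a + c) (by fun_prop) hCc hC'.2)
  refine ⟨U, hUo, hCc.of_isClosed_subset (AddSubgroup.isClosed_of_isOpen _ hUo) ?_⟩
  intro a ha
  simpa using ha.1 0 h0

variable {F : Type} [Field F] [TopologicalSpace F] [IsTopologicalRing F]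

lemma exists_compact_open_subring 
    [LocallyCompactSpace F] [TotallyDisconnectedSpace F] [T2Space F] (hF : ¬ DiscreteTopology F) :
    ∃ O : Subring F, IsOpen (O : Set F) ∧ IsCompact (O : Set F) := by
  obtain ⟨U, hUo, hUc⟩ := exists_compact_open_addSubgroup F
  have hU0 : ∃ u ∈ U, u ≠ 0 := by
    by_contra! h
    apply hF
    apply discreteTopology_of_isOpen_singleton_zero
    convert hUo
    ext x
    constructor
    · rintro rfl; exact U.zero_mem
    · exact h x
  obtain ⟨u, hu, hu0⟩ := hU0
  let O : Subring F :=
    { carrier := {a | ∀ c ∈ (U : Set F), a * c ∈ (U : Set F)}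
      zero_mem' := by simp
      one_mem' := by simp
      add_mem' := by
        intro a b ha hb c hc
        rw [add_mul]; exact U.add_mem (ha c hc) (hb c hc)
      mul_mem' := by
        intro a b ha hb c hc
        rw [mul_assoc]; exact ha _ (hb c hc)
      neg_mem' := by
        intro a ha c hc
        rw [neg_mul]; exact U.neg_mem (ha c hc) }
  have hOo : IsOpen (O : Set F) := isOpen_forall (fun a c : F => a * c) (by fun_prop) hUc hUo
  refine ⟨O, hOo, ?_⟩
  have h1 : IsCompact ((fun x => x * u⁻¹) '' (U : Set F)) := hUc.image (by fun_prop)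
  refine h1.of_isClosed_subset (AddSubgroup.isClosed_of_isOpen O.toAddSubgroup hOo) ?_
  intro a ha
  exact ⟨a * u, ha u hu, by field_simp⟩

/-- dichotomy: unit or topologically nilpotent -/
lemma unit_or_nilp [T2Space F] (O : Subring F) (hc : IsCompact (O : Set F)) 
    (a : F) (ha : a ∈ O) :
    (∃ b ∈ O, a * b = 1) ∨ (∀ U ∈ 𝓝 (0:F), ∃ n, ∀ x ∈ O, a ^ n * x ∈ U) := by
  have hcl : IsClosed (O : Set F) := hc.isClosed
  let S : Set F := Set.range (fun n : ℕ => a ^ (n+1))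
  have hSO : closure S ⊆ O := closure_minimal (by rintro _ ⟨n, rfl⟩; exact O.pow_mem ha _) hcl
  obtain ⟨m, hm, hmm⟩ := exists_idempotent_in_compact_subsemigroup (M := F)
    (fun r => by fun_prop) (closure S) ⟨a, subset_closure ⟨0, by simp⟩⟩
    (hc.of_isClosed_subset isClosed_closure hSO) (by
      intro x hx y hy
      refine map_mem_closure₂ continuous_mul hx hy ?_
      rintro _ ⟨n, rfl⟩ _ ⟨k, rfl⟩
      exact ⟨n + k + 1, by ring⟩)
  have hm01 : m = 0 ∨ m = 1 := by
    rcases eq_or_ne m 0 with h | h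
    · exact Or.inl h
    · right; exact mul_left_cancel₀ h (by simpa using hmm)
  rcases hm01 with rfl | rfl
  · right
    intro U hU
    obtain ⟨V, hVU, hVo, hV0⟩ := mem_nhds_iff.1 hU
    have h1 := isOpen_forall (fun b c : F => b * c) (by fun_prop) hc hVo
    obtain ⟨_, h2, ⟨n, rfl⟩⟩ := mem_closure_iff.1 hm _ h1 (by intro k _; simpa using hV0)
    exact ⟨n + 1, fun x hx => hVU (h2 x hx)⟩
  · left
    have h1 : IsClosed ((fun x => a * x) '' (O : Set F)) := (hc.image (by fun_prop)).isClosed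
    have h2 : closure S ⊆ (fun x => a * x) '' (O : Set F) := by
      apply closure_minimal _ h1
      rintro _ ⟨n, rfl⟩
      exact ⟨a ^ n, O.pow_mem ha _, by ring⟩
    obtain ⟨b, hb, hab⟩ := h2 hm
    exact ⟨b, hb, hab⟩

lemma exists_pi [T2Space F] (hF : ¬ DiscreteTopology F) (O : Subring F)
    (ho : IsOpen (O : Set F)) (hc : IsCompact (O : Set F)) :
    ∃ p ∈ O, p ≠ 0 ∧ (∀ b ∈ O, p * b ≠ 1) := by
  by_contra! h
  apply hF
  apply discreteTopology_of_isOpen_singleton_zero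
  have h1 : IsOpen {a : F | ∀ k ∈ (O : Set F), a * k ∈ ({1}ᶜ : Set F)} :=
    isOpen_forall (fun b c : F => b * c) (by fun_prop) hc isOpen_compl_singleton
  convert h1.inter ho
  ext a
  constructor
  · rintro rfl; simp [O.zero_mem]
  · rintro ⟨h2, h3⟩
    by_contra h0
    obtain ⟨b, hb, hab⟩ := h a h3 h0
    exact h2 b hb hab

/-- The package of structure of `F` we use. -/
structure Str (O : Subring F) (p : F) (c : ℕ) : Prop where
  op : IsOpen (O : Set F)
  cpt : IsCompact (O : Set F)
  mem : p ∈ O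
  ne : p ≠ 0
  nonunit : ∀ b ∈ O, p * b ≠ 1
  nil : ∀ U ∈ 𝓝 (0:F), ∃ n, ∀ x ∈ O, p ^ n * x ∈ U
  bd : ∀ u ∈ O, (∀ b ∈ O, u ≠ p * b) → ∃ y ∈ O, u * y = p ^ c

lemma absorb {O : Subring F} {p : F} (op : IsOpen (O : Set F))
    (nil : ∀ U ∈ 𝓝 (0:F), ∃ n, ∀ x ∈ O, p ^ n * x ∈ U) (x : F) : ∃ n, p ^ n * x ∈ O := by
  have h : (fun a : F => a * x) ⁻¹' (O : Set F) ∈ 𝓝 (0:F) :=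
    (op.preimage (by fun_prop)).mem_nhds (by simp [O.zero_mem])
  obtain ⟨n, hn⟩ := nil _ h
  exact ⟨n, by simpa using hn 1 O.one_mem⟩

lemma exists_str 
    [LocallyCompactSpace F] [TotallyDisconnectedSpace F] [T2Space F] (hF : ¬ DiscreteTopology F) :
    ∃ (O : Subring F) (p : F) (c : ℕ), Str O p c := by
  obtain ⟨O, op, cpt⟩ := exists_compact_open_subring hF
  obtain ⟨p, mem, ne, nonunit⟩ := exists_pi hF O op cpt
  have nil := (unit_or_nilp O cpt p mem).resolve_left (by rintro ⟨b, hb, h⟩; exact nonunit b hb h)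
  -- 1 + p b is a unit
  have hunit : ∀ b ∈ O, ∃ d ∈ O, (1 + p * b) * d = 1 := by
    intro b hb
    have h1 : 1 + p * b ∈ O := O.add_mem O.one_mem (O.mul_mem mem hb)
    refine (unit_or_nilp O cpt _ h1).resolve_right ?_
    intro h
    have hpO : (fun a : F => p⁻¹ * a) ⁻¹' (O : Set F) ∈ 𝓝 (0:F) :=
      (op.preimage (by fun_prop)).mem_nhds (by simp [O.zero_mem])
    obtain ⟨n, hn⟩ := h _ hpO
    have h2 : p⁻¹ * (1 + p * b) ^ n ∈ O := by simpa using hn 1 O.one_mem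
    have key : ∀ k : ℕ, ∃ e ∈ O, (1 + p * b) ^ k = 1 + p * e := by
      intro k
      induction k with
      | zero => exact ⟨0, O.zero_mem, by simp⟩
      | succ k ih =>
        obtain ⟨e, he, hk⟩ := ih
        refine ⟨b + e + e * (p * b), O.add_mem (O.add_mem hb he) (O.mul_mem he (O.mul_mem mem hb)), ?_⟩
        rw [pow_succ, hk]; ring
    obtain ⟨e, he, hk⟩ := key n
    refine nonunit _ (O.sub_mem h2 he) ?_
    rw [hk]; field_simp; ring
  let Z : Set F := O \ ((fun x => p * x) '' (O : Set F))
  have hpO : IsOpen ((fun x => p * x) '' (O : Set F)) :=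
    (Homeomorph.mulLeft₀ p ne).isOpenMap _ op
  have hZ : IsCompact Z := cpt.diff hpO
  let T : ℕ → Set F := fun n => {u | ∃ y ∈ O, u * y = p ^ n}
  have hTmono : ∀ n m, n ≤ m → T n ⊆ T m := by
    rintro n m hnm u ⟨y, hy, h⟩
    refine ⟨y * p ^ (m - n), O.mul_mem hy (O.pow_mem mem _), ?_⟩
    rw [← mul_assoc, h, ← pow_add]; congr 1; omega
  have hTo : ∀ n, IsOpen (T n) := by
    intro n
    rw [isOpen_iff_mem_nhds]
    rintro u ⟨y, hy, h⟩
    -- u' = u + p^(n+1) b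
    have h1 : (fun x : F => (p ^ (n+1))⁻¹ * (x - u)) ⁻¹' (O : Set F) ∈ 𝓝 u :=
      (op.preimage (by fun_prop)).mem_nhds (by simp [O.zero_mem])
    filter_upwards [h1] with x hx
    have hx' : (p ^ (n+1))⁻¹ * (x - u) ∈ O := hx
    set b := (p ^ (n+1))⁻¹ * (x - u) with hb
    have hxe : x = u * (1 + p * (y * b)) := by
      have : x = u + p ^ (n+1) * b := by rw [hb]; field_simp; ring
      rw [this, pow_succ, ← h]; ring
    obtain ⟨d, hd, hd1⟩ := hunit (y * b) (O.mul_mem hy hx')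
    refine ⟨y * d, O.mul_mem hy hd, ?_⟩
    rw [hxe, ← h]
    linear_combination u * y * hd1
  have hcov : Z ⊆ ⋃ n, T n := by
    rintro u ⟨hu, hu'⟩
    have hu0 : u ≠ 0 := by rintro rfl; exact hu' ⟨0, O.zero_mem, by simp⟩
    obtain ⟨n, hn⟩ := absorb op nil u⁻¹
    exact Set.mem_iUnion.2 ⟨n, _, hn, by field_simp⟩
  obtain ⟨c, hc⟩ := hZ.elim_directed_cover T hTo hcov
    (directed_of_isDirected_le (fun n m h => hTmono n m h))
  exact ⟨O, p, c, op, cpt, mem, ne, nonunit, nil, fun u hu h => hc ⟨hu, by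
    rintro ⟨b, hb, rfl⟩; exact h b hb rfl⟩⟩


lemma continuous_char {θ : AddChar F ℂ} (h : {x | θ x = 1} ∈ 𝓝 (0:F)) : Continuous θ := by
  rw [continuous_iff_continuousAt]
  intro x
  have h1 : (fun y => y - x) ⁻¹' {x | θ x = 1} ∈ 𝓝 x := by
    apply (show Continuous (fun y : F => y - x) by fun_prop).continuousAt
    simpa using h
  have h2 : θ =ᶠ[𝓝 x] fun _ => θ x := by
    filter_upwards [h1] with y hy
    have hy' : θ (y - x) = 1 := hy
    have : y = (y - x) + x := by ring
    rw [this, AddChar.map_add_eq_mul, hy', one_mul]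
  exact (continuousAt_const).congr h2.symm

/-- annihilator of `O` -/
def Ann (O : Subring F) (ψ : AddChar F ℂ) : AddSubgroup F where
  carrier := {y | ∀ x ∈ O, ψ (y * x) = 1}
  zero_mem' := by simp
  add_mem' := by
    intro a b ha hb x hx
    rw [add_mul, AddChar.map_add_eq_mul, ha x hx, hb x hx, one_mul]
  neg_mem' := by
    intro a ha x hx
    rw [neg_mul, AddChar.map_neg_eq_inv, ha x hx, inv_one]

lemma mem_Ann {O : Subring F} {ψ : AddChar F ℂ} {y : F} :
    y ∈ Ann O ψ ↔ ∀ x ∈ O, ψ (y * x) = 1 := Iff.rfl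

lemma Ann_compact [T2Space F] {O : Subring F} {p : F} {c : ℕ} (S : Str O p c) {ψ : AddChar F ℂ}
    (hψ : {x | ψ x = 1} ∈ 𝓝 (0:F)) (hne : ∃ z, ψ z ≠ 1) :
    IsCompact (Ann O ψ : Set F) := by
  have hcont := continuous_char hψ
  obtain ⟨z, hz⟩ := hne
  obtain ⟨k, hk⟩ := absorb S.op S.nil z
  have hcl : IsClosed (Ann O ψ : Set F) := by
    have : (Ann O ψ : Set F) = ⋂ x ∈ O, {y | ψ (y * x) = 1} := by
      ext y; simp [mem_Ann]
    rw [this]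
    refine isClosed_biInter fun x _ => ?_
    exact isClosed_eq (hcont.comp (by fun_prop)) continuous_const
  have hK : IsCompact ((fun x => (p ^ (c + k))⁻¹ * x) '' (O : Set F)) := S.cpt.image (by fun_prop)
  refine hK.of_isClosed_subset hcl ?_
  intro y hy
  have hp := S.ne
  suffices h : p ^ (c + k) * y ∈ O from ⟨_, h, by field_simp⟩
  classical
  have hex := absorb S.op S.nil y
  by_cases hn : Nat.find hex ≤ c + k
  · have h1 := Nat.find_spec hex
    have : p ^ (c + k) * y = p ^ (c + k - Nat.find hex) * (p ^ Nat.find hex * y) := by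
      rw [← mul_assoc, ← pow_add]; congr 2; omega
    rw [this]
    exact O.mul_mem (O.pow_mem S.mem _) h1
  · exfalso
    set n := Nat.find hex with hnn
    have h1 : p ^ n * y ∈ O := Nat.find_spec hex
    obtain ⟨w, hw, hw'⟩ := S.bd _ h1 (by
      intro b hb h
      have h2 : ¬ (p ^ (n - 1) * y ∈ O) := Nat.find_min hex (by omega)
      apply h2
      have : p * (p ^ (n - 1) * y) = p * b := by
        rw [← h, ← mul_assoc, ← pow_succ']; congr 2; omega
      rw [mul_left_cancel₀ hp this]; exact hb)
    apply hz
    have h3 : z = y * (w * p ^ (n - c - k) * (p ^ k * z)) := by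
      have h4 : p ^ n = p ^ c * (p ^ (n - c - k) * p ^ k) := by
        rw [← pow_add, ← pow_add]; congr 1; omega
      rw [h4] at hw'
      have h5 : (p ^ (n - c - k) * p ^ k) * y * w = 1 := by
        apply mul_left_cancel₀ (pow_ne_zero c hp)
        linear_combination hw'
      linear_combination (-z) * h5
    rw [h3]
    exact hy _ (O.mul_mem (O.mul_mem hw (O.pow_mem S.mem _)) hk)

lemma relIndex_ne_zero' (U K : AddSubgroup F) (hU : IsOpen (U : Set F))
    (hK : IsCompact (K : Set F)) : U.relIndex K ≠ 0 := by
  have : CompactSpace K := isCompact_iff_compactSpace.1 hK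
  have ho : IsOpen ((U.addSubgroupOf K : AddSubgroup K) : Set K) :=
    hU.preimage continuous_subtype_val
  have : Finite (K ⧸ U.addSubgroupOf K) := AddSubgroup.quotient_finite_of_isOpen _ ho
  exact AddSubgroup.index_ne_zero_of_finite

/-- scaling -/
def sc (t : F) (L : AddSubgroup F) : AddSubgroup F := L.map (AddMonoidHom.mulLeft t)

lemma mem_sc {t : F} {L : AddSubgroup F} {x : F} : x ∈ sc t L ↔ ∃ y ∈ L, t * y = x := Iff.rfl

lemma sc_relIndex {t : F} (ht : t ≠ 0) (A B : AddSubgroup F) :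
    (sc t A).relIndex (sc t B) = A.relIndex B :=
  AddSubgroup.relIndex_map_map_of_injective A B (mul_right_injective₀ ht)

lemma sc_comm (t s : F) (A : AddSubgroup F) : sc t (sc s A) = sc s (sc t A) := by
  ext x
  simp only [mem_sc]
  constructor
  · rintro ⟨_, ⟨y, hy, rfl⟩, rfl⟩
    exact ⟨_, ⟨y, hy, rfl⟩, by ring⟩
  · rintro ⟨_, ⟨y, hy, rfl⟩, rfl⟩
    exact ⟨_, ⟨y, hy, rfl⟩, by ring⟩

lemma sc_mono {t : F} {A B : AddSubgroup F} (h : A ≤ B) : sc t A ≤ sc t B :=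
  AddSubgroup.map_mono h

lemma Ann_relIndex [T2Space F] {O : Subring F} {p : F} {c : ℕ} (S : Str O p c) {ψ : AddChar F ℂ}
    (hψ : {x | ψ x = 1} ∈ 𝓝 (0:F)) (hne : ∃ z, ψ z ≠ 1) (t : F) (ht : t ∈ O) (ht0 : t ≠ 0) :
    (sc t (Ann O ψ)).relIndex (Ann O ψ) = (sc t O.toAddSubgroup).relIndex O.toAddSubgroup := by
  obtain ⟨k, hk⟩ := S.nil _ hψ
  have hpk : p ^ k ≠ 0 := pow_ne_zero _ S.ne
  set D := Ann O ψ
  set A := O.toAddSubgroup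
  have hDt : sc t D ≤ D := by
    rintro _ ⟨y, hy, rfl⟩ x hx
    have := hy (t * x) (O.mul_mem ht hx)
    convert this using 2
    simp; ring
  have hAt : sc t A ≤ A := by
    rintro _ ⟨y, hy, rfl⟩
    exact O.mul_mem ht hy
  set A1 := sc (p ^ k) A
  have hA1D : A1 ≤ D := by
    rintro _ ⟨y, hy, rfl⟩ x hx
    have := hk (y * x) (O.mul_mem hy hx)
    simpa [mul_assoc] using this
  have hA1o : IsOpen (A1 : Set F) := (Homeomorph.mulLeft₀ (p ^ k) hpk).isOpenMap _ S.op
  have hfin : A1.relIndex D ≠ 0 := relIndex_ne_zero' _ _ hA1o (Ann_compact S hψ hne)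
  have hA1t : sc t A1 ≤ A1 := by
    have : sc t A1 = sc (p ^ k) (sc t A) := sc_comm _ _ _
    rw [this]; exact sc_mono hAt
  have e1 := AddSubgroup.relIndex_mul_relIndex _ _ _ hA1t hA1D
  have e2 := AddSubgroup.relIndex_mul_relIndex _ _ _ (sc_mono (t := t) hA1D) hDt
  rw [sc_relIndex ht0, ← e1, mul_comm] at e2
  have e3 := Nat.eq_of_mul_eq_mul_right (Nat.pos_of_ne_zero hfin) e2
  rw [e3, show sc t A1 = sc (p ^ k) (sc t A) from sc_comm _ _ _, sc_relIndex hpk]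

lemma exists_lift (A N : AddSubgroup F) (θ : AddChar F ℂ) (h : ∀ x ∈ N, θ x = 1) :
    ∃ χ : AddChar (A ⧸ N.addSubgroupOf A) ℂ, ∀ x : A, χ (QuotientAddGroup.mk x) = θ x := by
  refine ⟨AddChar.toAddMonoidHomEquiv.symm (QuotientAddGroup.lift (N.addSubgroupOf A)
    ((AddChar.toAddMonoidHomEquiv θ).comp A.subtype) ?_), ?_⟩
  · intro x hx
    have := h x hx
    show Additive.ofMul (θ x) = 0
    rw [this]; rfl
  · intro x
    rfl

lemma duality_fin [T2Space F] {O : Subring F} {p : F} {c : ℕ} (S : Str O p c) {ψ : AddChar F ℂ}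
    (hψ : {x | ψ x = 1} ∈ 𝓝 (0:F)) (hne : ∃ z, ψ z ≠ 1) (t : F) (ht : t ∈ O) (ht0 : t ≠ 0)
    (χ : AddChar F ℂ) (hχ : ∀ x ∈ O, χ x = 1) :
    ∃ a ∈ Ann O ψ, ∀ x ∈ O, χ (t⁻¹ * x) = ψ (a * (t⁻¹ * x)) := by
  set A := O.toAddSubgroup
  set N := sc t A
  have hNo : IsOpen (N : Set F) := (Homeomorph.mulLeft₀ t ht0).isOpenMap _ S.op
  have hNfin : N.relIndex A ≠ 0 := relIndex_ne_zero' _ _ hNo S.cpt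
  set G := A ⧸ N.addSubgroupOf A
  have : Finite G := by
    have : (N.addSubgroupOf A).FiniteIndex := ⟨hNfin⟩
    infer_instance
  have := Fintype.ofFinite G
  have hf : ∀ a : Ann O ψ, ∃ f : AddChar G ℂ, ∀ x : A,
      f (QuotientAddGroup.mk x) = ψ (a * (t⁻¹ * x)) := by
    intro a
    obtain ⟨f, hf⟩ := exists_lift A N (ψ.mulShift (a * t⁻¹)) (by
      rintro _ ⟨y, hy, rfl⟩
      rw [AddChar.mulShift_apply]
      have := a.2 y hy
      convert this using 2
      simp; field_simp)
    refine ⟨f, fun x => ?_⟩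
    rw [hf, AddChar.mulShift_apply, mul_assoc]
  choose f hf using hf
  let M := (sc t (Ann O ψ)).addSubgroupOf (Ann O ψ)
  let g : (Ann O ψ ⧸ M) → AddChar G ℂ := fun q => f q.out
  have hg : Function.Injective g := by
    intro q q' h
    rw [← q.out_eq, ← q'.out_eq]
    apply QuotientAddGroup.eq.2
    show ((-q.out + q'.out : Ann O ψ) : F) ∈ sc t (Ann O ψ)
    refine ⟨t⁻¹ * ((-q.out + q'.out : Ann O ψ) : F), ?_, by simp; field_simp⟩
    intro x hx
    have h1 := DFunLike.congr_fun h (QuotientAddGroup.mk (⟨x, hx⟩ : A))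
    simp only [g, hf] at h1
    have h2 : t⁻¹ * ((-q.out + q'.out : Ann O ψ) : F) * x
      = -((q.out : Ann O ψ) * (t⁻¹ * x)) + (q'.out : Ann O ψ) * (t⁻¹ * x) := by
      push_cast; ring
    rw [h2, AddChar.map_add_eq_mul, AddChar.map_neg_eq_inv, ← h1]
    apply inv_mul_cancel₀
    intro h0
    have := AddChar.map_add_eq_mul ψ (((q.out : Ann O ψ) : F) * (t⁻¹ * x)) (-(((q.out : Ann O ψ) : F) * (t⁻¹ * x)))
    rw [h0] at this
    simp at this
  have hcard : Nat.card (AddChar G ℂ) ≤ Nat.card (Ann O ψ ⧸ M) := by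
    have h1 : Nat.card (Ann O ψ ⧸ M) = N.relIndex A := Ann_relIndex S hψ hne t ht ht0
    have h2 : Nat.card G = N.relIndex A := rfl
    rw [h1, ← h2, Nat.card_eq_fintype_card, Nat.card_eq_fintype_card, AddChar.card_eq]
  have hbij := hg.bijective_of_nat_card_le hcard
  obtain ⟨χ', hχ'⟩ := exists_lift A N (χ.mulShift t⁻¹) (by
      rintro _ ⟨y, hy, rfl⟩
      rw [AddChar.mulShift_apply]
      have := hχ y hy
      convert this using 2
      simp; field_simp)
  obtain ⟨q, hq⟩ := hbij.2 χ'
  refine ⟨(q.out : Ann O ψ), (q.out : Ann O ψ).2, fun x hx => ?_⟩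
  have h3 := hχ' ⟨x, hx⟩
  rw [← hq] at h3
  simp only [g, hf, AddChar.mulShift_apply] at h3
  exact h3.symm

lemma duality [T2Space F] {O : Subring F} {p : F} {c : ℕ} (S : Str O p c) {ψ : AddChar F ℂ}
    (hψ : {x | ψ x = 1} ∈ 𝓝 (0:F)) (hne : ∃ z, ψ z ≠ 1)
    (χ : AddChar F ℂ) (hχ : {x | χ x = 1} ∈ 𝓝 (0:F)) :
    ∃ a, ∀ x, χ x = ψ (a * x) := by
  have hcont := continuous_char hψ
  obtain ⟨m, hm⟩ := S.nil _ hχ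
  have hp := S.ne
  let χ' := χ.mulShift (p ^ m)
  have hχ' : ∀ x ∈ O, χ' x = 1 := fun x hx => by
    rw [AddChar.mulShift_apply]; exact hm x hx
  let T : ℕ → Set F := fun n => {a | a ∈ Ann O ψ ∧ ∀ x ∈ O, ψ (a * ((p ^ n)⁻¹ * x)) = χ' ((p ^ n)⁻¹ * x)}
  have hD := Ann_compact S hψ hne
  have hTc : ∀ n, IsClosed (T n) := by
    intro n
    have : T n = (Ann O ψ : Set F) ∩ ⋂ x ∈ O, {a | ψ (a * ((p ^ n)⁻¹ * x)) = χ' ((p ^ n)⁻¹ * x)} := by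
      ext y; simp [T]
    rw [this]
    refine hD.isClosed.inter (isClosed_biInter fun x _ => ?_)
    exact isClosed_eq (hcont.comp (by fun_prop)) continuous_const
  obtain ⟨a, ha⟩ := IsCompact.nonempty_iInter_of_sequence_nonempty_isCompact_isClosed T
    (by
      rintro n a ⟨ha, h⟩
      refine ⟨ha, fun x hx => ?_⟩
      have := h (p * x) (O.mul_mem S.mem hx)
      have e : (p ^ (n+1))⁻¹ * (p * x) = (p ^ n)⁻¹ * x := by
        rw [pow_succ]; field_simp
      rwa [e] at this)
    (by
      intro n
      obtain ⟨a, ha, h⟩ := duality_fin S hψ hne (p ^ n) (O.pow_mem S.mem n) (pow_ne_zero _ hp) χ' hχ'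
      exact ⟨a, ha, fun x hx => (h x hx).symm⟩)
    (hD.of_isClosed_subset (hTc 0) fun a h => h.1) hTc
  have h1 : ∀ x, χ' x = ψ (a * x) := by
    intro x
    obtain ⟨n, hn⟩ := absorb S.op S.nil x
    have h2 := (Set.mem_iInter.1 ha n).2 _ hn
    have e : (p ^ n)⁻¹ * (p ^ n * x) = x := by field_simp
    rw [e] at h2
    exact h2.symm
  refine ⟨a * (p ^ m)⁻¹, fun x => ?_⟩
  have h2 := h1 ((p ^ m)⁻¹ * x)
  rw [AddChar.mulShift_apply] at h2
  rw [mul_assoc, ← h2]; congr 1; field_simp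

lemma exists_natCast_mem {O : Subring F} {p : F} {c : ℕ} (S : Str O p c) {U : Set F}
    (hU : U ∈ 𝓝 (0:F)) : ∃ N : ℕ, 0 < N ∧ (N : F) ∈ U := by
  obtain ⟨n, hn⟩ := S.nil _ hU
  have hpk : p ^ n ≠ 0 := pow_ne_zero _ S.ne
  have hNo : IsOpen (sc (p ^ n) O.toAddSubgroup : Set F) :=
    (Homeomorph.mulLeft₀ _ hpk).isOpenMap _ S.op
  obtain ⟨N, h0, -, h1⟩ := AddSubgroup.exists_nsmul_mem_of_relIndex_ne_zero
    (relIndex_ne_zero' _ O.toAddSubgroup hNo S.cpt) (a := (1:F)) O.one_mem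
  obtain ⟨y, hy, h2⟩ := h1.1
  refine ⟨N, h0, ?_⟩
  have := hn y hy
  have h3 : p ^ n * y = (N : F) := by simpa using h2
  rwa [h3] at this


lemma eigen_quot {V I : Type*} [AddCommGroup V] [Module ℂ V] (τ : I → Module.End ℂ V)
    (hcomm : ∀ x y u, τ x (τ y u) = τ y (τ x u))
    (htor : ∀ x u, ∃ N : ℕ, 0 < N ∧ (τ x ^ N) u = u) (v : V) (hv : v ≠ 0) :
    ∃ (S : Submodule ℂ V) (χ : I → ℂ), v ∉ S ∧ (∀ x, ∀ u, τ x u - χ x • u ∈ S) := by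
  let P : Set (Submodule ℂ V) := {S | v ∉ S ∧ ∀ x, ∀ u ∈ S, τ x u ∈ S}
  obtain ⟨S, -, hS⟩ := zorn_le_nonempty₀ P (by
    intro c hc hch y hy
    refine ⟨sSup c, ⟨?_, ?_⟩, fun z hz => le_sSup hz⟩
    · intro h
      obtain ⟨S, hS, h⟩ := (Submodule.mem_sSup_of_directed ⟨y, hy⟩ hch.directedOn).1 h
      exact (hc hS).1 h
    · intro x u hu
      obtain ⟨S, hS, h⟩ := (Submodule.mem_sSup_of_directed ⟨y, hy⟩ hch.directedOn).1 hu
      exact (le_sSup hS : S ≤ sSup c) ((hc hS).2 x u h)) ⊥ ⟨by simpa using hv, by simp⟩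
  obtain ⟨hvS, hinv⟩ := hS.1
  have hmax : ∀ S' : Submodule ℂ V, S ≤ S' → (∀ x, ∀ u ∈ S', τ x u ∈ S') → v ∉ S' → S' ≤ S :=
    fun S' h1 h2 h3 => hS.2 (show S' ∈ P from ⟨h3, h2⟩) h1
  have claimA : ∀ x, ∃ z : ℂ, τ x v - z • v ∈ S := by
    intro x
    by_contra! hno
    have hker : ∀ (z : ℂ) (u : V), τ x u - z • u ∈ S → u ∈ S := by
      intro z u hu
      refine hmax (S.comap (τ x - z • (1 : Module.End ℂ V))) ?_ ?_ ?_ (by simpa using hu)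
      · intro w hw
        simpa using S.sub_mem (hinv x w hw) (S.smul_mem z hw)
      · intro y w hw
        have hw' : τ x w - z • w ∈ S := by simpa using hw
        have := hinv y _ hw'
        rw [map_sub, hcomm y x, map_smul] at this
        simpa using this
      · simpa using hno z
    have hprod : ∀ s : Multiset ℂ, ∀ u : V,
        Polynomial.aeval (τ x) ((s.map (fun a => Polynomial.X - Polynomial.C a)).prod) u ∈ S →
        u ∈ S := by
      intro s
      induction s using Multiset.induction_on with
      | empty => intro u hu; simpa using hu
      | cons a s ih =>
        intro u hu
        apply ih
        apply hker a
        rw [Multiset.map_cons, Multiset.prod_cons, map_mul] at hu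
        simpa [Module.algebraMap_end_apply] using hu
    obtain ⟨N, hN, hNv⟩ := htor x v
    have hsp := (IsAlgClosed.splits (Polynomial.X ^ N - 1 : Polynomial ℂ)).eq_prod_roots_of_monic
      (by simpa using Polynomial.monic_X_pow_sub_C (1:ℂ) hN.ne')
    apply hvS
    apply hprod (Polynomial.X ^ N - 1 : Polynomial ℂ).roots
    rw [← hsp]
    simp [hNv]
  choose χ hχ using claimA
  refine ⟨S, χ, hvS, fun x => ?_⟩
  have hpow : ∀ k : ℕ, (τ x ^ k) v - (χ x) ^ k • v ∈ S := by
    intro k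
    induction k with
    | zero => simp
    | succ k ih =>
      have h1 := hinv x _ ih
      have h2 := S.add_mem h1 (S.smul_mem (χ x ^ k) (hχ x))
      convert h2 using 1
      rw [pow_succ', Module.End.mul_apply, map_sub, map_smul]
      module
  obtain ⟨M, hM, hMv⟩ := htor x v
  have hz : χ x ^ M = 1 := by
    by_contra hne
    apply hvS
    have h1 := hpow M
    rw [hMv] at h1
    have h2 : (1 - χ x ^ M) • v ∈ S := by convert h1 using 1; module
    exact (S.smul_mem_iff (sub_ne_zero.2 (Ne.symm hne))).1 h2
  have hz0 : χ x ≠ 0 := by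
    intro h0; rw [h0, zero_pow hM.ne'] at hz; exact zero_ne_one hz
  by_contra! hno
  obtain ⟨u₀, hu₀⟩ := hno
  let Q : Module.End ℂ V := τ x - χ x • (1 : Module.End ℂ V)
  have hQ : ∀ u, Q u = τ x u - χ x • u := fun u => by simp [Q]
  have hv' : v ∈ S ⊔ LinearMap.range Q := by
    by_contra hv'
    refine hu₀ (hmax (S ⊔ LinearMap.range Q) le_sup_left ?_ hv' ?_)
    · intro y w hw
      obtain ⟨s, hs, r, ⟨q, rfl⟩, rfl⟩ := Submodule.mem_sup.1 hw
      refine Submodule.mem_sup.2 ⟨_, hinv y s hs, _, ⟨τ y q, rfl⟩, ?_⟩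
      rw [map_add, hQ, hQ, map_sub, map_smul, hcomm y x]
    · rw [← hQ]
      exact (le_sup_right : _ ≤ S ⊔ LinearMap.range Q) ⟨u₀, rfl⟩
  obtain ⟨s, hs, r, ⟨u, rfl⟩, hsum⟩ := Submodule.mem_sup.1 hv'
  have hQu : Q u = v - s := by rw [← hsum]; abel
  have hTu : τ x u = χ x • u + (v - s) := by rw [← hQu, hQ]; abel
  have hpu : ∀ k : ℕ, (τ x ^ k) u - ((χ x) ^ k • u + (k * (χ x) ^ k * (χ x)⁻¹) • v) ∈ S := by
    intro k
    induction k with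
    | zero => simp
    | succ k ih =>
      have h1 := hinv x _ ih
      have h2 := S.add_mem h1 (S.smul_mem ((k * (χ x) ^ k * (χ x)⁻¹)) (hχ x))
      have h3 := S.sub_mem h2 (S.smul_mem (χ x ^ k) hs)
      convert h3 using 1
      rw [pow_succ', Module.End.mul_apply, map_sub, map_add, map_smul, map_smul, hTu]
      have e : ((k + 1 : ℕ) : ℂ) * χ x ^ (k+1) * (χ x)⁻¹ = (k * χ x ^ k * (χ x)⁻¹) * χ x + χ x ^ k := by
        push_cast; field_simp; ring
      rw [e]
      module
  obtain ⟨N, hN, hNu⟩ := htor x u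
  have hNM : (τ x ^ (N * M)) u = u := by
    rw [pow_mul]
    have : ∀ k : ℕ, ((τ x ^ N) ^ k) u = u := by
      intro k
      induction k with
      | zero => simp
      | succ k ih => rw [pow_succ, Module.End.mul_apply, hNu, ih]
    exact this M
  have hzNM : χ x ^ (N * M) = 1 := by rw [mul_comm, pow_mul, hz, one_pow]
  have h1 := hpu (N * M)
  rw [hNM, hzNM] at h1
  apply hvS
  have hne : (((N * M : ℕ) : ℂ) * (χ x)⁻¹) ≠ 0 :=
    mul_ne_zero (by exact_mod_cast (Nat.mul_pos hN hM).ne') (inv_ne_zero hz0)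
  apply (S.smul_mem_iff hne).1
  have h2 := S.neg_mem h1
  convert h2 using 1
  module

lemma exists_section {F : Type} [Field F] {W : Type} [AddCommGroup W] [Module F W]
    [FiniteDimensional F W] (B : W →ₗ[F] W →ₗ[F] F)
    (hnondeg : ∀ w : W, (∀ w' : W, B w w' = 0) → w = 0)
    (X : Submodule F W)
    (hX_isotropic : ∀ x ∈ X, ∀ y ∈ X, B x y = 0)
    (hX_lagrangian : Module.finrank F W = 2 * Module.finrank F X)
    {ι : Type} [Fintype ι] (b : Module.Basis ι F X) :
    ∃ s : (ι → F) →ₗ[F] W, (∀ a i, B (s a) (b i) = a i) ∧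
      ∀ w, w - s (fun i => B w (b i)) ∈ X := by
  let A : W →ₗ[F] (ι → F) := LinearMap.pi (fun i => B.flip (b i))
  have hA : ∀ w i, A w i = B w (b i) := fun w i => rfl
  have hBinj : Function.Injective B := by
    rw [injective_iff_map_eq_zero]
    intro w hw
    exact hnondeg w fun w' => by rw [hw]; rfl
  have hBsurj : Function.Surjective B :=
    (LinearMap.injective_iff_surjective_of_finrank_eq_finrank
      (Subspace.dual_finrank_eq (K := F) (V := W)).symm).1 hBinj
  have hAsurj : Function.Surjective A := by
    intro a
    obtain ⟨g, hg⟩ := LinearMap.exists_extend (b.constr F a)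
    obtain ⟨w, rfl⟩ := hBsurj g
    refine ⟨w, funext fun i => ?_⟩
    have := LinearMap.congr_fun hg (b i)
    rw [Module.Basis.constr_basis] at this
    exact this
  obtain ⟨s, hs⟩ := A.exists_rightInverse_of_surjective (LinearMap.range_eq_top.2 hAsurj)
  have hs' : ∀ a, A (s a) = a := fun a => LinearMap.congr_fun hs a
  have hker : X = LinearMap.ker A := by
    apply Submodule.eq_of_le_of_finrank_eq
    · intro x hx
      rw [LinearMap.mem_ker]
      funext i
      exact hX_isotropic x hx _ (b i).2
    · have h1 := A.finrank_range_add_finrank_ker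
      rw [LinearMap.range_eq_top.2 hAsurj, finrank_top, Module.finrank_fintype_fun_eq_card,
        ← Module.finrank_eq_card_basis b] at h1
      omega
  refine ⟨s, fun a i => ?_, fun w => ?_⟩
  · rw [← hA, hs']
  · refine hker.ge ?_
    rw [LinearMap.mem_ker, map_sub]
    change A w - A (s (A w)) = 0
    rw [hs', sub_self]

lemma isOpen_char {θ : AddChar F ℂ} (h : {x | θ x = 1} ∈ 𝓝 (0:F)) (z : ℂ) :
    IsOpen {x | θ x = z} := by
  rw [isOpen_iff_mem_nhds]
  intro x hx
  have h1 : (fun y => y - x) ⁻¹' {x | θ x = 1} ∈ 𝓝 x := by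
    apply (show Continuous (fun y : F => y - x) by fun_prop).continuousAt
    simpa using h
  filter_upwards [h1] with y hy
  have hy' : θ (y - x) = 1 := hy
  have hx' : θ x = z := hx
  have : y = (y - x) + x := by ring
  show θ y = z
  rw [this, AddChar.map_add_eq_mul, hy', one_mul, hx']


section rep

variable {Wsp : Type} [AddCommGroup Wsp] [Module F Wsp]
  {B : Wsp →ₗ[F] Wsp →ₗ[F] F} {V : Type} [AddCommGroup V] [Module ℂ V]
  {ω : Representation ℂ (Heisenberg B) V} {ψ : AddChar F ℂ}

lemma char_ne_zero (ψ : AddChar F ℂ) (x : F) : ψ x ≠ 0 := by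
  intro h0
  have := AddChar.map_add_eq_mul ψ x (-x)
  rw [h0] at this
  simp at this

lemma char_sum {A ι : Type*} [AddCommGroup A] (θ : AddChar A ℂ) (s : Finset ι) (f : ι → A) :
    θ (∑ i ∈ s, f i) = ∏ i ∈ s, θ (f i) := by
  classical
  induction s using Finset.induction_on with
  | empty => simp
  | insert a s ha ih =>
    rw [Finset.sum_insert ha, Finset.prod_insert ha, AddChar.map_add_eq_mul, ih]

lemma hmul (a b : Heisenberg B) : a * b = ⟨a.w + b.w, a.t + b.t + B a.w b.w⟩ := rfl

lemma rep_eq (hcentral : ∀ (z : F) (v : V), ω ⟨0, z⟩ v = ψ z • v) (w : Wsp) (t : F) (v : V) :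
    ω ⟨w, t⟩ v = ψ t • ω ⟨w, 0⟩ v := by
  rw [← hcentral, ← Module.End.mul_apply, ← map_mul, hmul]
  simp

lemma rep_mul (hcentral : ∀ (z : F) (v : V), ω ⟨0, z⟩ v = ψ z • v) (w w' : Wsp) (v : V) :
    ω ⟨w, 0⟩ (ω ⟨w', 0⟩ v) = ψ (B w w') • ω ⟨w + w', 0⟩ v := by
  rw [← rep_eq hcentral, ← Module.End.mul_apply, ← map_mul, hmul]
  simp

lemma rep_comm (halt : ∀ w : Wsp, B w w = 0)
    (hcentral : ∀ (z : F) (v : V), ω ⟨0, z⟩ v = ψ z • v) (w w' : Wsp) (v : V) :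
    ω ⟨w, 0⟩ (ω ⟨w', 0⟩ v) = ψ (2 * B w w') • ω ⟨w', 0⟩ (ω ⟨w, 0⟩ v) := by
  have hskew : B w' w = - B w w' := by
    have := halt (w + w')
    simp only [map_add, LinearMap.add_apply, halt] at this
    linear_combination this
  rw [rep_mul hcentral, rep_mul hcentral, smul_smul, ← AddChar.map_add_eq_mul, hskew,
    add_comm w' w]
  congr 2; ring

lemma rep_zero (v : V) : ω ⟨0, 0⟩ v = v := by
  have : (⟨0, 0⟩ : Heisenberg B) = 1 := rfl
  rw [this, map_one]; rfl

lemma isOpen_stab [TopologicalSpace Wsp] (hsmooth : IsSmoothRep ω)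
    {T : Type*} [TopologicalSpace T] (f : T → Wsp) (hf : Continuous f) (g : T → F)
    (hg : Continuous g) (v : V) : IsOpen {t | ω ⟨f t, g t⟩ v = v} := by
  have h1 : Continuous (fun t => (⟨f t, g t⟩ : Heisenberg B)) :=
    continuous_induced_rng.2 (hf.prodMk hg)
  exact (hsmooth v).preimage h1

end rep

end LagInv

open LagInv Topology
/-- **Existence and uniqueness of the Lagrangian-invariant ("Schrödinger")
functional.**  Let `X` be a Lagrangian subspace of a finite-dimensional
symplectic `F`-space `W`, viewed as an abelian subgroup of `H(W)` via
`x ↦ (x, 0)`.  Let `ω` be an irreducible smooth representation of `H(W)` with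
central character `ψ`.  Then there exists a nonzero linear functional on `ω`
invariant under `X`, unique up to scalar multiples. -/
theorem lagrangian_invariant_functional_exists_unique
    -- `F` : a non-archimedean local field of characteristic zero
    (F : Type) [Field F] [CharZero F] [TopologicalSpace F] [IsTopologicalRing F]
    [LocallyCompactSpace F] [TotallyDisconnectedSpace F] [T2Space F]
    (hF : ¬ DiscreteTopology F)
    -- a fixed nontrivial unitary character `ψ` of `F`
    (ψ : AddChar F ℂ) (hψ_unitary : ∀ z : F, ‖ψ z‖ = 1) (hψ_ne : ∃ z : F, ψ z ≠ 1)
    -- `W` : a finite-dimensional symplectic `F`-space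
    (Wsp : Type) [AddCommGroup Wsp] [Module F Wsp] [FiniteDimensional F Wsp]
    [TopologicalSpace Wsp] [IsTopologicalAddGroup Wsp] [ContinuousSMul F Wsp]
    (B : Wsp →ₗ[F] Wsp →ₗ[F] F)
    (halt : ∀ w : Wsp, B w w = 0)
    (hnondeg : ∀ w : Wsp, (∀ w' : Wsp, B w w' = 0) → w = 0)
    -- `X` : a Lagrangian subspace of `W`
    (X : Submodule F Wsp)
    (hX_isotropic : ∀ x ∈ X, ∀ y ∈ X, B x y = 0)
    (hX_lagrangian : Module.finrank F Wsp = 2 * Module.finrank F X)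
    -- `ω` : an irreducible smooth representation of `H(W)` with central character `ψ`
    (V : Type) [AddCommGroup V] [Module ℂ V]
    (ω : Representation ℂ (Heisenberg B) V)
    (hsmooth : IsSmoothRep ω)
    (hnonzero : ∃ v : V, v ≠ 0)
    (hirred : ∀ p : Submodule ℂ V,
      (∀ (h : Heisenberg B) (v : V), v ∈ p → ω h v ∈ p) → p = ⊥ ∨ p = ⊤)
    (hcentral : ∀ (z : F) (v : V), ω ⟨0, z⟩ v = ψ z • v) :
    (∃ lam : V →ₗ[ℂ] ℂ, lam ≠ 0 ∧
        ∀ x ∈ X, ∀ v : V, lam (ω ⟨x, 0⟩ v) = lam v) ∧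
    (∀ lam₁ lam₂ : V →ₗ[ℂ] ℂ,
        (∀ x ∈ X, ∀ v : V, lam₁ (ω ⟨x, 0⟩ v) = lam₁ v) →
        (∀ x ∈ X, ∀ v : V, lam₂ (ω ⟨x, 0⟩ v) = lam₂ v) →
        lam₁ ≠ 0 → ∃ c : ℂ, lam₂ = c • lam₁) := by
  obtain ⟨O, p, c, S⟩ := exists_str hF
  obtain ⟨v0, hv0⟩ := hnonzero
  have h2 : (2 : F) ≠ 0 := two_ne_zero
  have hψ : {x | ψ x = 1} ∈ 𝓝 (0:F) := by
    have h1 := isOpen_stab hsmooth (fun _ : F => (0:Wsp)) continuous_const id continuous_id v0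
    refine Filter.mem_of_superset (h1.mem_nhds (rep_zero v0)) ?_
    intro t ht
    have ht' : ω ⟨0, t⟩ v0 = v0 := ht
    rw [hcentral] at ht'
    show ψ t = 1
    by_contra hne
    have h3 : (ψ t - 1) • v0 = 0 := by rw [sub_smul, ht', one_smul, sub_self]
    exact (smul_ne_zero (sub_ne_zero.2 hne) hv0) h3
  let b := Module.finBasis F X
  obtain ⟨s, hs, hsX⟩ := exists_section B hnondeg X hX_isotropic hX_lagrangian b
  have hscont : Continuous s := s.continuous_on_pi
  have hline : ∀ (x : Wsp) (u : V), {t : F | ω ⟨t • x, 0⟩ u = u} ∈ 𝓝 (0:F) := by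
    intro x u
    refine (isOpen_stab hsmooth (fun t : F => t • x) (by fun_prop) (fun _ => 0)
      continuous_const u).mem_nhds ?_
    show ω ⟨(0:F) • x, 0⟩ u = u
    rw [zero_smul, rep_zero]
  have hXmul : ∀ (x y : X) (u : V), ω ⟨x, 0⟩ (ω ⟨y, 0⟩ u) = ω ⟨((x + y : X) : Wsp), 0⟩ u := by
    intro x y u
    rw [rep_mul hcentral, hX_isotropic x x.2 y y.2]
    simp
  constructor
  · -- existence
    let τ : X → Module.End ℂ V := fun x => ω ⟨x, 0⟩
    have hτpow : ∀ (x : X) (k : ℕ) (u : V), (τ x ^ k) u = ω ⟨((k : F) • (x : Wsp)), 0⟩ u := by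
      intro x k u
      induction k with
      | zero => simp [rep_zero]
      | succ k ih =>
        rw [pow_succ', Module.End.mul_apply, ih]
        have := hXmul x ((k : F) • x) u
        push_cast at this ⊢
        rw [add_smul, one_smul, add_comm]
        exact this
    obtain ⟨M, χ, hvM, hχ⟩ := eigen_quot τ
      (fun x y u => by
        show ω ⟨x, 0⟩ (ω ⟨y, 0⟩ u) = ω ⟨y, 0⟩ (ω ⟨x, 0⟩ u)
        rw [hXmul, hXmul, add_comm])
      (fun x u => by
        obtain ⟨N, hN, h⟩ := exists_natCast_mem S (hline x u)
        exact ⟨N, hN, by rw [hτpow]; exact h⟩) v0 hv0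
    obtain ⟨μ, hμv, hμM⟩ := Submodule.exists_le_ker_of_notMem hvM
    have hμ : ∀ (x : X) (u : V), μ (ω ⟨x, 0⟩ u) = χ x * μ u := by
      intro x u
      have h1 : μ (ω ⟨x, 0⟩ u - χ x • u) = 0 := hμM (hχ x u)
      rw [map_sub, map_smul, sub_eq_zero] at h1
      exact h1
    have hχadd : ∀ x y : X, χ (x + y) = χ x * χ y := by
      intro x y
      have h1 := hμ (x + y) v0
      rw [← hXmul, hμ, hμ, ← mul_assoc] at h1
      exact (mul_right_cancel₀ hμv h1).symm
    have hχone : ∀ x : X, ω ⟨x, 0⟩ v0 = v0 → χ x = 1 := by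
      intro x hx
      have h1 := hμ x v0
      rw [hx] at h1
      exact mul_right_cancel₀ hμv (by rw [← h1, one_mul])
    have hχ0 : χ 0 = 1 := hχone 0 (rep_zero v0)
    let X' : AddChar X ℂ := ⟨χ, hχ0, hχadd⟩
    have hdual : ∀ i, ∃ a, ∀ t, χ (t • b i) = ψ (a * t) := by
      intro i
      let θ : AddChar F ℂ := ⟨fun t => χ (t • b i), by simp [hχ0], fun t t' => by
        rw [add_smul, hχadd]⟩
      refine duality S hψ hψ_ne θ ?_
      refine Filter.mem_of_superset (hline (b i) v0) ?_
      intro t ht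
      exact hχone (t • b i) ht
    choose a ha using hdual
    let w := s (fun i => a i / 2)
    have hw : ∀ x : X, χ x = ψ (2 * B w x) := by
      intro x
      have hx : x = ∑ i, b.repr x i • b i := (b.sum_repr x).symm
      have h1 : χ x = ∏ i, χ (b.repr x i • b i) := by
        conv_lhs => rw [hx]
        exact char_sum X' _ _
      have h3 : (2 * B w x) = ∑ i, a i * b.repr x i := by
        conv_lhs => rw [hx]
        rw [Submodule.coe_sum, map_sum, Finset.mul_sum]
        refine Finset.sum_congr rfl fun i _ => ?_
        rw [Submodule.coe_smul, map_smul, hs, smul_eq_mul]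
        field_simp
      rw [h1, h3, char_sum]
      exact Finset.prod_congr rfl fun i _ => ha i _
    refine ⟨μ.comp (ω ⟨-w, 0⟩), ?_, ?_⟩
    · intro h0
      have h1 := LinearMap.congr_fun h0 (ω ⟨w, 0⟩ v0)
      rw [LinearMap.comp_apply, rep_mul hcentral] at h1
      simp [halt, rep_zero] at h1
      exact hμv h1
    · intro x hx v
      rw [LinearMap.comp_apply, LinearMap.comp_apply, rep_comm halt hcentral, map_smul]
      rw [hμ ⟨x, hx⟩, hw, smul_eq_mul, ← mul_assoc, ← AddChar.map_add_eq_mul]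
      simp
  · -- uniqueness
    intro l₁ l₂ hl₁ hl₂ hne
    have key : ∀ v, l₁ v = 0 → l₂ v = 0 := by
      intro v hv
      let Z : Set (Fin (Module.finrank F X) → F) := {a | l₁ (ω ⟨s a, 0⟩ v) ≠ 0}
      have hZcl : IsClosed Z := by
        rw [← isOpen_compl_iff, isOpen_iff_mem_nhds]
        intro a ha
        have ha' : l₁ (ω ⟨s a, 0⟩ v) = 0 := by simpa [Z] using ha
        have h1 := (isOpen_stab hsmooth (fun a' => s (a' - a)) (by fun_prop) (fun _ => 0)
          continuous_const v).mem_nhds (x := a) (by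
            show ω ⟨s (a - a), 0⟩ v = v
            rw [sub_self, map_zero, rep_zero])
        filter_upwards [h1] with a' h3
        have h3' : ω ⟨s (a' - a), 0⟩ v = v := h3
        have h4 := rep_mul hcentral (s a) (s (a' - a)) v
        rw [h3', ← map_add, add_sub_cancel] at h4
        rw [h4, map_smul, smul_eq_mul] at ha'
        have h5 := (mul_eq_zero.1 ha').resolve_left (char_ne_zero ψ _)
        simpa [Z] using h5
      have hm : {t : F | ∀ i, ω ⟨t • (b i : Wsp), 0⟩ v = v} ∈ 𝓝 (0:F) :=
        Filter.eventually_all.2 fun i => hline (b i) v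
      obtain ⟨m, hm⟩ := S.nil _ hm
      have hr : (2 * p ^ m) ≠ 0 := mul_ne_zero h2 (pow_ne_zero _ S.ne)
      have hK : IsCompact ((fun a : Fin (Module.finrank F X) → F => (2 * p ^ m)⁻¹ • a) ''
          Set.pi Set.univ (fun _ => (Ann O ψ : Set F))) :=
        (isCompact_univ_pi fun _ => Ann_compact S hψ hψ_ne).image (by fun_prop)
      have hZc : IsCompact Z := by
        refine hK.of_isClosed_subset hZcl ?_
        intro a ha
        refine ⟨(2 * p ^ m) • a, ?_, by simp only []; rw [smul_smul, inv_mul_cancel₀ hr, one_smul]⟩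
        intro i _ x hx
        have h3 : ω ⟨(p ^ m * x) • (b i : Wsp), 0⟩ v = v := hm x hx i
        have h4 := rep_comm halt hcentral (s a) ((p ^ m * x) • (b i : Wsp)) v
        rw [h3, map_smul, hs, smul_eq_mul] at h4
        have h5 := congrArg l₁ h4
        rw [map_smul, hl₁ _ (X.smul_mem _ (b i).2), smul_eq_mul] at h5
        have h6 := mul_right_cancel₀ (ha : l₁ (ω ⟨s a, 0⟩ v) ≠ 0) ((one_mul _).trans h5)
        rw [h6]
        congr 1
        simp only [Pi.smul_apply, smul_eq_mul]; ring
      have hP : ∃ (P : Module.End ℂ V) (κ : (Fin (Module.finrank F X) → F) → ℂ),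
          (∀ u, l₂ (P u) = l₂ u) ∧
          (∀ a u, l₁ (ω ⟨s a, 0⟩ (P u)) = κ a * l₁ (ω ⟨s a, 0⟩ u)) ∧ ∀ a ∈ Z, κ a = 0 := by
        refine hZc.induction_on (p := fun Z' => ∃ (P : Module.End ℂ V)
          (κ : (Fin (Module.finrank F X) → F) → ℂ),
          (∀ u, l₂ (P u) = l₂ u) ∧
          (∀ a u, l₁ (ω ⟨s a, 0⟩ (P u)) = κ a * l₁ (ω ⟨s a, 0⟩ u)) ∧ ∀ a ∈ Z', κ a = 0)
          ?_ ?_ ?_ ?_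
        · exact ⟨1, fun _ => 1, by simp, by simp, by simp⟩
        · rintro Z₁ Z₂ h12 ⟨P, κ, h3, h4, h5⟩
          exact ⟨P, κ, h3, h4, fun a ha => h5 a (h12 ha)⟩
        · rintro Z₁ Z₂ ⟨P, κ, h3, h4, h5⟩ ⟨P', κ', h3', h4', h5'⟩
          refine ⟨P * P', κ * κ', fun u => ?_, fun a u => ?_, ?_⟩
          · rw [Module.End.mul_apply, h3, h3']
          · rw [Module.End.mul_apply, h4, h4', Pi.mul_apply, mul_assoc]
          · rintro a (ha | ha)
            · rw [Pi.mul_apply, h5 a ha, zero_mul]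
            · rw [Pi.mul_apply, h5' a ha, mul_zero]
        · intro a ha
          have ha0 : a ≠ 0 := by
            rintro rfl
            apply (ha : l₁ (ω ⟨s 0, 0⟩ v) ≠ 0)
            rw [map_zero, rep_zero, hv]
          obtain ⟨i, hi⟩ : ∃ i, a i ≠ 0 := by
            by_contra! h
            exact ha0 (funext h)
          obtain ⟨z, hz⟩ := hψ_ne
          let x : Wsp := (z / (2 * a i)) • (b i : Wsp)
          have hx : x ∈ X := X.smul_mem _ (b i).2
          have hBx : ∀ a', 2 * B (s a') x = a' i * (z / a i) := by
            intro a'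
            simp only [x]
            rw [map_smul, hs, smul_eq_mul]
            field_simp
          have h1z : 1 - ψ z ≠ 0 := sub_ne_zero.2 (Ne.symm hz)
          refine ⟨{a' | ψ (a' i * (z / a i)) = ψ z}, ?_, (1 - ψ z)⁻¹ • (ω ⟨x, 0⟩ - ψ z • 1),
            fun a' => (1 - ψ z)⁻¹ * (ψ (a' i * (z / a i)) - ψ z), ?_, ?_, ?_⟩
          · apply mem_nhdsWithin_of_mem_nhds
            refine ((isOpen_char hψ (ψ z)).preimage (f := fun a' : Fin (Module.finrank F X) → F =>
              a' i * (z / a i)) (by fun_prop)).mem_nhds ?_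
            show ψ (a i * (z / a i)) = ψ z
            congr 1; field_simp
          · intro u
            simp only [LinearMap.smul_apply, LinearMap.sub_apply, Module.End.one_apply, map_smul,
              map_sub, hl₂ x hx, smul_eq_mul]
            field_simp
          · intro a' u
            simp only [LinearMap.smul_apply, LinearMap.sub_apply, Module.End.one_apply, map_smul,
              map_sub, smul_eq_mul]
            rw [rep_comm halt hcentral, map_smul, hl₁ x hx, hBx, smul_eq_mul]
            ring
          · intro a' ha'
            have : ψ (a' i * (z / a i)) = ψ z := ha'
            simp only []
            rw [this, sub_self, mul_zero]
      obtain ⟨P, κ, hP2, hP1, hκ⟩ := hP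
      have hs0 : ∀ a, l₁ (ω ⟨s a, 0⟩ (P v)) = 0 := by
        intro a
        rw [hP1]
        by_cases ha : a ∈ Z
        · rw [hκ a ha, zero_mul]
        · have : l₁ (ω ⟨s a, 0⟩ v) = 0 := by simpa [Z] using ha
          rw [this, mul_zero]
      have hw0 : ∀ w, l₁ (ω ⟨w, 0⟩ (P v)) = 0 := by
        intro w
        have h1 := rep_mul hcentral (w - s (fun i => B w (b i))) (s (fun i => B w (b i))) (P v)
        have h3 := congrArg l₁ h1
        rw [hl₁ _ (hsX w), hs0, sub_add_cancel, map_smul, smul_eq_mul] at h3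
        exact (mul_eq_zero.1 h3.symm).resolve_left (char_ne_zero ψ _)
      let q : Submodule ℂ V := ⨅ h : Heisenberg B, LinearMap.ker (l₁.comp (ω h))
      have hq : ∀ u, u ∈ q ↔ ∀ h, l₁ (ω h u) = 0 := by
        intro u; simp [q, Submodule.mem_iInf]
      have hPq : P v ∈ q := by
        rw [hq]
        rintro ⟨w, t⟩
        rw [rep_eq hcentral, map_smul, hw0, smul_zero]
      rcases hirred q (by
        intro h u hu
        rw [hq] at hu ⊢
        intro h'
        rw [← Module.End.mul_apply, ← map_mul]
        exact hu _) with hbot | htop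
      · rw [hbot, Submodule.mem_bot] at hPq
        rw [← hP2, hPq, map_zero]
      · exfalso
        apply hne
        ext u
        have hu : u ∈ q := by rw [htop]; trivial
        have := (hq u).1 hu ⟨0, 0⟩
        rwa [rep_zero] at this
    obtain ⟨u, hu⟩ : ∃ u, l₁ u ≠ 0 := by
      by_contra! h
      exact hne (LinearMap.ext h)
    refine ⟨l₂ u / l₁ u, LinearMap.ext fun v => ?_⟩
    have h1 := key (v - (l₁ v / l₁ u) • u) (by
      rw [map_sub, map_smul, smul_eq_mul]; field_simp; ring)
    rw [map_sub, map_smul, smul_eq_mul, sub_eq_zero] at h1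
    rw [h1, LinearMap.smul_apply, smul_eq_mul]
    field_simp
end
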